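/- arXiv:1806.04783 — 2 statements merged into one kernel-verified Lean document; each statement's English description precedes it below -/
import Mathlib

section
/- There is an absolute constant C > 0 such that for every prime p ≥ 3, every basis {ω₁, ω₂, ω₃} of F_{p³} over F_p, and every box B with 1 ≤ H₁ ≤ H₂ ≤ H₃ < √(p/2), the multiplicative energy satisfies E(B) ≤ C·|B|²·(log p)³. -/
open scoped Classical

/-!
Let `N z` be the number of pairs `(u, v)` of integer vectors with `|uᵢ|, |vᵢ| ≤ Hᵢ` whose elements
of the field have ratio `z`. Differences of pairs of elements of `B` with quotient `z` are of this
kind, so `E(B) ≤ 5 |B|² + ∑ N(z)²`, summed over the `z` with `N z ≥ 2`.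

Suppose that the lattice points counted by `N z` span a lattice of rank at most `s` and that
`m ^ s < N z ≤ 2 ^ s * m ^ s`. By pigeonhole modulo `m`, there is a nonzero lattice point in the box
shrunk by the factor `m / 2`; since it determines `z`, there are at most `(∏ᵢ (4 Hᵢ / m + 1))²` such
`z`. Summing over the dyadic values of `m` costs one logarithm.

This suffices when the rank is small. For `z` in the prime field,
each coordinate carries the same lattice, of rank one within the box. Any other `z` has degree
three, so setting the first coordinates to zero leaves rank at most one; this covers the `z` for
which enough points remain, and for the others rank at most three suffices. In larger rank, the
trace-dual lattice, taken in the dual box, has rank at most two: the spans are orthogonal for an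
integral pairing, so their ranks add up to at most six. A Bohr set argument bounds `N z` by a
multiple of the dual count, to which the same dyadic argument applies, and `N z = O(1)` if the dual
box contains only the zero point.
-/

open Finset Module

namespace BoxEnergy

section Lattice

variable {ι R : Type*} [Fintype ι] [CommRing R]

/-- The integral linear combination `∑ i, c i • ω i`, as a function of `c`. -/
abbrev intComb (ω : ι → R) : (ι → ℤ) →ₗ[ℤ] R := Fintype.linearCombination ℤ ω

/-- The lattice of pairs `(u, v)` of integer vectors for which `z` is the ratio of the elements
with coordinates `u` and `v`, written without division as `∑ uᵢ ωᵢ = z * ∑ vᵢ ωᵢ`. -/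
def ratioLattice (ω : ι → R) (z : R) : Submodule ℤ ((ι → ℤ) × (ι → ℤ)) :=
  LinearMap.ker (intComb ω ∘ₗ LinearMap.fst ℤ _ _ -
    LinearMap.mulLeft ℤ z ∘ₗ intComb ω ∘ₗ LinearMap.snd ℤ _ _)

/-- The points `(u, v)` of `ratioLattice ω z` with `|u i|, |v i| ≤ T i`. -/
noncomputable def ratioPoints (ω : ι → R) (z : R) (T : ι → ℕ) : Finset ((ι → ℤ) × (ι → ℤ)) :=
  {q ∈ Icc (fun i ↦ -(T i : ℤ)) (fun i ↦ T i) ×ˢ Icc (fun i ↦ -(T i : ℤ)) (fun i ↦ T i) |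
    q ∈ ratioLattice ω z}

variable {ω : ι → R} {z : R} {T : ι → ℕ} {q : (ι → ℤ) × (ι → ℤ)}

theorem mem_ratioLattice : q ∈ ratioLattice ω z ↔ intComb ω q.1 = z * intComb ω q.2 := by
  simp [ratioLattice, sub_eq_zero]

theorem mem_ratioPoints :
    q ∈ ratioPoints ω z T ↔ (∀ i, |q.1 i| ≤ T i ∧ |q.2 i| ≤ T i) ∧ q ∈ ratioLattice ω z := by
  simp only [ratioPoints, mem_filter, mem_product, mem_Icc, Pi.le_def, abs_le]
  grind

theorem zero_mem_ratioPoints : 0 ∈ ratioPoints ω z T := by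
  simp [mem_ratioPoints]

theorem one_lt_card_ratioPoints :
    1 < #(ratioPoints ω z T) ↔ ∃ q ∈ ratioPoints ω z T, q ≠ 0 :=
  ⟨fun h ↦ exists_mem_ne h 0,
    fun ⟨q, hq, hq0⟩ ↦ one_lt_card.2 ⟨q, hq, 0, zero_mem_ratioPoints, hq0⟩⟩

/-- The sublattice of `ratioLattice ω z` spanned by the points of the box with half-sides `T`;
its rank measures how many successive minima fit into that box. -/
def ratioSpan (ω : ι → R) (z : R) (T : ι → ℕ) : Submodule ℤ ((ι → ℤ) × (ι → ℤ)) :=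
  Submodule.span ℤ (ratioPoints ω z T : Set ((ι → ℤ) × (ι → ℤ)))

theorem ratioSpan_le : ratioSpan ω z T ≤ ratioLattice ω z :=
  Submodule.span_le.2 fun _ hq ↦ (mem_ratioPoints.1 hq).2

/-- Coordinates modulo `m` on the span take at most `m ^ rank` values. -/
theorem exists_sub_eq_smul_of_pow_finrank_lt_card {M : Type*} [AddCommGroup M]
    [IsTorsionFree ℤ M] (A : Finset M) {m : ℕ} (hm : m ≠ 0)
    (hA : m ^ finrank ℤ (Submodule.span ℤ (A : Set M)) < #A) :
    ∃ x ∈ A, ∃ y ∈ A, x ≠ y ∧ ∃ t ∈ Submodule.span ℤ (A : Set M), x - y = (m : ℤ) • t := by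
  have : NeZero m := ⟨hm⟩
  let L := Submodule.span ℤ (A : Set M)
  let b := finBasis ℤ L
  let residues : A → Fin (finrank ℤ L) → ZMod m :=
    fun x i ↦ (b.repr ⟨x, Submodule.subset_span x.2⟩ i : ZMod m)
  obtain ⟨x, y, hxy, hres⟩ : ∃ x y, x ≠ y ∧ residues x = residues y :=
    Fintype.exists_ne_map_eq_of_card_lt residues (by simpa [ZMod.card] using hA)
  have hdvd (i) : (m : ℤ) ∣ b.repr (⟨x, Submodule.subset_span x.2⟩ -
      ⟨y, Submodule.subset_span y.2⟩) i := by
    simpa [residues, ZMod.intCast_eq_intCast_iff_dvd_sub] using congrFun hres.symm i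
  choose k hk using hdvd
  refine ⟨x, x.2, y, y.2, Subtype.coe_injective.ne hxy, (∑ i, k i • b i : L), SetLike.coe_mem _, ?_⟩
  have h : (⟨x, Submodule.subset_span x.2⟩ - ⟨y, Submodule.subset_span y.2⟩ : L) =
      (m : ℤ) • ∑ i, k i • b i :=
    b.ext_elem fun i ↦ by
      simp only [hk, map_smul, map_sum, Finsupp.smul_apply, Finsupp.finsetSum_apply,
        Basis.repr_self, Finsupp.single_apply, smul_eq_mul]
      simp
  exact congrArg Subtype.val h

theorem exists_mem_ratioPoints_ne_zero_of_pow_finrank_lt_card {m : ℕ} (hm : m ≠ 0)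
    (h : m ^ finrank ℤ (ratioSpan ω z T) < #(ratioPoints ω z T)) :
    ∃ t ∈ ratioPoints ω z (fun i ↦ 2 * T i / m), t ≠ 0 := by
  obtain ⟨x, hx, y, hy, hxy, t, ht, hsub⟩ := exists_sub_eq_smul_of_pow_finrank_lt_card _ hm h
  have hbound {a b c : ℤ} {n : ℕ} (ha : |a| ≤ n) (hb : |b| ≤ n) (hc : a - b = m * c) :
      |c| ≤ ((2 * n / m : ℕ) : ℤ) := by
    have hm' : (0 : ℤ) < m := by positivity
    push_cast
    rw [Int.le_ediv_iff_mul_le hm', ← abs_of_pos hm', ← abs_mul, mul_comm, ← hc]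
    linarith [abs_sub a b]
  refine ⟨t, mem_ratioPoints.2 ⟨fun i ↦ ?_, ratioSpan_le ht⟩, ?_⟩
  · have hx := (mem_ratioPoints.1 hx).1 i
    have hy := (mem_ratioPoints.1 hy).1 i
    exact ⟨hbound hx.1 hy.1 (congrArg (·.1 i) hsub), hbound hx.2 hy.2 (congrArg (·.2 i) hsub)⟩
  · rintro rfl
    exact hxy (sub_eq_zero.1 (by simpa using hsub))

end Lattice

section Coordinates

variable {p : ℕ} {ι R : Type*} [Fintype ι] [CommRing R] [Algebra (ZMod p) R]
  (b : Basis ι (ZMod p) R) {z : R} {T : ι → ℕ}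

theorem equivFun_intComb (c : ι → ℤ) (i : ι) : b.equivFun (intComb b c) i = c i := by
  have h : intComb b c = b.equivFun.symm (fun i ↦ (c i : ZMod p)) := by
    simp [Fintype.linearCombination_apply, Basis.equivFun_symm_apply, Int.cast_smul_eq_zsmul]
  rw [h, LinearEquiv.apply_symm_apply]

variable {b}

theorem eq_of_intComb_eq {c d : ι → ℤ} (h : intComb b c = intComb b d)
    (hlt : ∀ i, |c i - d i| < p) : c = d := by
  funext i
  have hmod : ((c i : ℤ) : ZMod p) = d i := by
    rw [← equivFun_intComb b, h, equivFun_intComb]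
  rw [← sub_eq_zero]
  exact Int.eq_zero_of_abs_lt_dvd
    (by simpa using (ZMod.intCast_eq_intCast_iff_dvd_sub _ _ _).1 hmod.symm) (hlt i)

theorem eq_zero_of_intComb_eq_zero {c : ι → ℤ} (h : intComb b c = 0) (hlt : ∀ i, |c i| < p) :
    c = 0 :=
  eq_of_intComb_eq (h.trans (map_zero _).symm) (by simpa using hlt)

theorem eq_of_mem_ratioPoints_of_snd_eq (hT : ∀ i, 2 * T i < p) {q q' : (ι → ℤ) × (ι → ℤ)}
    (hq : q ∈ ratioPoints b z T) (hq' : q' ∈ ratioPoints b z T) (h : q.2 = q'.2) : q = q' := by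
  rw [mem_ratioPoints, mem_ratioLattice] at hq hq'
  refine Prod.ext (eq_of_intComb_eq (b := b) (by rw [hq.2, hq'.2, h]) fun i ↦ ?_) h
  have := hT i
  have := abs_sub (q.1 i) (q'.1 i)
  have := (hq.1 i).1
  have := (hq'.1 i).1
  omega

theorem injOn_intComb_snd (hT : ∀ i, 2 * T i < p) :
    Set.InjOn (fun q ↦ intComb b q.2) (ratioPoints b z T : Set ((ι → ℤ) × (ι → ℤ))) := by
  refine fun x hx y hy hxy ↦ eq_of_mem_ratioPoints_of_snd_eq hT hx hy
    (eq_of_intComb_eq hxy fun i ↦ ?_)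
  have := hT i
  have := abs_sub (x.2 i) (y.2 i)
  have := ((mem_ratioPoints.1 hx).1 i).2
  have := ((mem_ratioPoints.1 hy).1 i).2
  omega

theorem mem_ratioLattice_algebraMap {a : ZMod p} {q : (ι → ℤ) × (ι → ℤ)} :
    q ∈ ratioLattice b (algebraMap (ZMod p) R a) ↔ ∀ i, (q.1 i : ZMod p) = a * q.2 i := by
  rw [mem_ratioLattice, ← Algebra.smul_def, ← b.equivFun.injective.eq_iff, funext_iff]
  simp only [map_smul, Pi.smul_apply, equivFun_intComb, smul_eq_mul]

theorem card_Icc_neg_self (n : ℕ) : #(Icc (-(n : ℤ)) n) = 2 * n + 1 := by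
  rw [Int.card_Icc]
  omega

/-- A non-zero point `(u, v)` determines `z`, because `∑ vᵢ ωᵢ = 0` would force `v = 0`
and then `u = 0`. -/
theorem card_le_of_forall_exists_mem_ratioPoints_ne_zero {F : Type*} [Field F]
    [Algebra (ZMod p) F] {b : Basis ι (ZMod p) F} (hT : ∀ i, T i < p) (S : Finset F)
    (hS : ∀ z ∈ S, ∃ t ∈ ratioPoints b z T, t ≠ 0) : #S ≤ (∏ i, (2 * T i + 1)) ^ 2 := by
  have hcard : #(Icc (fun i ↦ -(T i : ℤ)) (fun i ↦ T i)) = ∏ i, (2 * T i + 1) := by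
    simp only [Pi.card_Icc, card_Icc_neg_self]
  choose! t ht ht0 using hS
  rw [sq, ← hcard, ← card_product]
  refine card_le_card_of_injOn t (fun z hz ↦ (mem_filter.1 (ht z hz)).1) fun z hz z' hz' heq ↦ ?_
  have hz_mem := mem_ratioPoints.1 (ht z hz)
  have hz'_mem := mem_ratioPoints.1 (ht z' hz')
  rw [← heq] at hz'_mem
  rw [mem_ratioLattice] at hz_mem hz'_mem
  by_contra hne
  have hv : intComb b (t z).2 = 0 :=
    (mul_eq_mul_right_iff.1 (hz_mem.2.symm.trans hz'_mem.2)).resolve_left hne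
  have hu : intComb b (t z).1 = 0 := by rw [hz_mem.2, hv, mul_zero]
  have hlt {n : ℤ} {i : ι} (hn : |n| ≤ T i) : |n| < p := hn.trans_lt (mod_cast hT i)
  exact ht0 z hz (Prod.ext (eq_zero_of_intComb_eq_zero hu fun i ↦ hlt (hz_mem.1 i).1)
    (eq_zero_of_intComb_eq_zero hv fun i ↦ hlt (hz_mem.1 i).2))

end Coordinates

section Dyadic

theorem two_pow_log_pow_lt {s n : ℕ} (hn : 1 < n) :
    (2 ^ Nat.log (2 ^ s) (n - 1)) ^ s < n := by
  have := Nat.pow_log_le_self (2 ^ s) (x := n - 1) (by omega)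
  rw [pow_right_comm]
  omega

theorem le_two_pow_mul_two_pow_log_pow {s : ℕ} (hs : s ≠ 0) (n : ℕ) :
    n ≤ 2 ^ s * (2 ^ Nat.log (2 ^ s) (n - 1)) ^ s := by
  have := Nat.lt_pow_succ_log_self (Nat.one_lt_two_pow hs) (n - 1)
  rw [pow_succ', pow_right_comm] at this
  omega

theorem sum_sq_le_sq_of_card_le_sq {α : Type*} {S : Finset α} {f : α → ℝ} {P K : ℝ} (hP : 0 < P)
    (hcard : (#S : ℝ) ≤ P ^ 2) (hf : ∀ z ∈ S, 0 ≤ f z) (hfK : ∀ z ∈ S, f z * P ≤ K) :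
    ∑ z ∈ S, f z ^ 2 ≤ K ^ 2 := by
  calc ∑ z ∈ S, f z ^ 2 ≤ ∑ _z ∈ S, (K / P) ^ 2 := sum_le_sum fun z hz ↦
        pow_le_pow_left₀ (hf z hz) ((le_div_iff₀ hP).2 (hfK z hz)) 2
    _ = #S * (K / P) ^ 2 := by rw [sum_const, nsmul_eq_mul]
    _ ≤ P ^ 2 * (K / P) ^ 2 := by gcongr
    _ = K ^ 2 := by field_simp

variable {p : ℕ} {ι F : Type*} [Fintype ι] [Field F] [Algebra (ZMod p) F]
  {b : Basis ι (ZMod p) F} {T : ι → ℕ}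

theorem card_le_prod_of_forall_pow_finrank_lt_card (hT : ∀ i, 2 * T i < p) {m : ℕ} (hm : m ≠ 0)
    (S : Finset F) (hS : ∀ z ∈ S, m ^ finrank ℤ (ratioSpan b z T) < #(ratioPoints b z T)) :
    (#S : ℝ) ≤ (∏ i, (4 * T i / m + 1 : ℝ)) ^ 2 := by
  have hcard := card_le_of_forall_exists_mem_ratioPoints_ne_zero (b := b)
    (T := fun i ↦ 2 * T i / m) (fun i ↦ (Nat.div_le_self _ _).trans_lt (hT i)) S
    fun z hz ↦ exists_mem_ratioPoints_ne_zero_of_pow_finrank_lt_card hm (hS z hz)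
  calc (#S : ℝ) ≤ (∏ i, (2 * (2 * T i / m : ℕ) + 1 : ℝ)) ^ 2 := mod_cast hcard
    _ ≤ (∏ i, (4 * T i / m + 1 : ℝ)) ^ 2 := by
      gcongr with i
      calc 2 * ((2 * T i / m : ℕ) : ℝ) ≤ 2 * ((2 * T i : ℕ) / m) := by gcongr; exact Nat.cast_div_le
        _ = 4 * T i / m := by push_cast; ring

theorem exists_le_two_mul_of_pow_finrank_lt_card {z : F} {m : ℕ} (hm : m ≠ 0)
    (h : m ^ finrank ℤ (ratioSpan b z T) < #(ratioPoints b z T)) : ∃ i, m ≤ 2 * T i := by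
  obtain ⟨t, ht, ht0⟩ := exists_mem_ratioPoints_ne_zero_of_pow_finrank_lt_card hm h
  by_contra! hlt
  have hbound := (mem_ratioPoints.1 ht).1
  simp only [Nat.div_eq_of_lt (hlt _), Nat.cast_zero, abs_nonpos_iff] at hbound
  exact ht0 (Prod.ext (funext fun i ↦ (hbound i).1) (funext fun i ↦ (hbound i).2))

/-- On the set of `z` with `m ^ s < #(ratioPoints b z T) ≤ 2 ^ s * m ^ s`, `m = 2 ^ j`, there are
at most `(∏ᵢ (4 Tᵢ / m + 1)) ^ 2` elements, so each dyadic level contributes at most `K ^ 2`. -/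
theorem sum_sq_le_of_forall_dyadic (hT : ∀ i, 2 * T i < p) {s : ℕ} (hs : s ≠ 0) (S : Finset F)
    (hS : ∀ z ∈ S, 1 < #(ratioPoints b z T)) (hrank : ∀ z ∈ S, finrank ℤ (ratioSpan b z T) ≤ s)
    {f : F → ℝ} (hf : ∀ z ∈ S, 0 ≤ f z) {K : ℝ}
    (hfK : ∀ z ∈ S, ∀ m : ℝ, 1 ≤ m → (∃ i, m ≤ 2 * T i) → m ^ s < #(ratioPoints b z T) →
      #(ratioPoints b z T) ≤ 2 ^ s * m ^ s → f z * ∏ i, (4 * T i / m + 1) ≤ K) :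
    ∑ z ∈ S, f z ^ 2 ≤ (Nat.log 2 p + 1 : ℕ) * K ^ 2 := by
  let level (z : F) : ℕ := Nat.log (2 ^ s) (#(ratioPoints b z T) - 1)
  have hpow (z) (hz : z ∈ S) : (2 ^ level z) ^ finrank ℤ (ratioSpan b z T) <
      #(ratioPoints b z T) :=
    (Nat.pow_le_pow_right Nat.one_le_two_pow (hrank z hz)).trans_lt (two_pow_log_pow_lt (hS z hz))
  have hlevel : ∀ z ∈ S, level z ∈ range (Nat.log 2 p + 1) := by
    intro z hz
    obtain ⟨i, hi⟩ := exists_le_two_mul_of_pow_finrank_lt_card (by positivity) (hpow z hz)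
    have := hT i
    exact mem_range_succ_iff.2 (Nat.le_log_of_pow_le one_lt_two (by omega))
  rw [← sum_fiberwise_of_maps_to hlevel, ← nsmul_eq_mul]
  refine (sum_le_card_nsmul _ _ _ fun j _ ↦ ?_).trans_eq (by rw [card_range])
  refine sum_sq_le_sq_of_card_le_sq (P := ∏ i, (4 * T i / (2 ^ j : ℕ) + 1)) (by positivity)
    (card_le_prod_of_forall_pow_finrank_lt_card (b := b) hT (by positivity) _ fun z hz ↦ ?_)
    (fun z hz ↦ hf z (mem_filter.1 hz).1) fun z hz ↦ ?_
  all_goals obtain ⟨hzS, rfl⟩ := mem_filter.1 hz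
  · exact hpow z hzS
  · exact hfK z hzS _ (mod_cast Nat.one_le_two_pow)
      (mod_cast exists_le_two_mul_of_pow_finrank_lt_card (by positivity) (hpow z hzS))
      (mod_cast two_pow_log_pow_lt (hS z hzS)) (mod_cast le_two_pow_mul_two_pow_log_pow hs _)

end Dyadic

section RankOne

theorem finrank_span_le_one_of_smul_eq_smul {R M : Type*} [CommRing R] [IsDomain R]
    [AddCommGroup M] [Module R M] [IsTorsionFree R M] {A : Set M} (ℓ : M →ₗ[R] R) {x₀ : M}
    (hx₀ : ℓ x₀ ≠ 0) (h : ∀ x ∈ A, ℓ x₀ • x = ℓ x • x₀) :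
    finrank R (Submodule.span R A) ≤ 1 := by
  have hspan : Set.EqOn (ℓ x₀ • LinearMap.id (R := R) (M := M)) (ℓ.smulRight x₀)
      (Submodule.span R A) := LinearMap.eqOn_span h
  have hinj : Function.Injective (ℓ.domRestrict (Submodule.span R A)) := by
    refine (injective_iff_map_eq_zero _).2 fun ⟨x, hx⟩ hℓ ↦ Subtype.ext ?_
    have hx_eq : ℓ x₀ • x = ℓ x • x₀ := hspan hx
    rw [show ℓ x = 0 from hℓ, zero_smul] at hx_eq
    exact (smul_eq_zero.1 hx_eq).resolve_left hx₀
  simpa using LinearMap.finrank_le_finrank_of_injective hinj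

theorem abs_mul_sub_mul_lt {a b c d : ℤ} {h p : ℕ} (hp : 2 * h ^ 2 < p) (ha : |a| ≤ h)
    (hb : |b| ≤ h) (hc : |c| ≤ h) (hd : |d| ≤ h) : |a * b - c * d| < p := by
  calc |a * b - c * d| ≤ |a * b| + |c * d| := abs_sub _ _
    _ = |a| * |b| + |c| * |d| := by rw [abs_mul, abs_mul]
    _ ≤ h * h + h * h := by gcongr
    _ < p := by zify at hp; linarith

variable {p : ℕ} {ι F : Type*} [Fintype ι] [Field F] [Algebra (ZMod p) F]
  {b : Basis ι (ZMod p) F} {z : F} {T : ι → ℕ} {h : ℕ}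

theorem finrank_ratioSpan_le_one_of_forall_mul_eq_mul (hT : ∀ i, T i ≤ h) (hp : 2 * h ^ 2 < p)
    (hdet : ∀ x ∈ ratioPoints b z T, ∀ y ∈ ratioPoints b z T, ∀ i j,
      x.2 i * y.2 j = x.2 j * y.2 i) : finrank ℤ (ratioSpan b z T) ≤ 1 := by
  have hbound {q} (hq : q ∈ ratioPoints b z T) (i : ι) : |q.1 i| ≤ h ∧ |q.2 i| ≤ h :=
    ((mem_ratioPoints.1 hq).1 i).imp (·.trans (mod_cast hT i)) (·.trans (mod_cast hT i))
  have hT' (i) : 2 * T i < p := by have := hT i; nlinarith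
  by_cases hsnd : ∃ x₀ ∈ ratioPoints b z T, x₀.2 ≠ 0
  · obtain ⟨x₀, hx₀, hne⟩ := hsnd
    obtain ⟨j, hj⟩ := Function.ne_iff.1 hne
    refine finrank_span_le_one_of_smul_eq_smul (x₀ := x₀)
      (LinearMap.proj j ∘ₗ LinearMap.snd ℤ (ι → ℤ) (ι → ℤ)) hj fun x hx ↦ ?_
    have h₂ : x₀.2 j • x.2 = x.2 j • x₀.2 :=
      funext fun i ↦ (mul_comm _ _).trans (hdet x hx x₀ hx₀ i j)
    refine Prod.ext (eq_of_intComb_eq (b := b) ?_ fun i ↦ ?_) h₂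
    · have h₂' := congrArg (intComb b) h₂
      have hx_mem := mem_ratioLattice.1 (mem_ratioPoints.1 hx).2
      have hx₀_mem := mem_ratioLattice.1 (mem_ratioPoints.1 hx₀).2
      simp only [map_smul] at h₂'
      change intComb b (x₀.2 j • x.1) = intComb b (x.2 j • x₀.1)
      rw [map_smul, map_smul, hx_mem, hx₀_mem, ← mul_smul_comm, ← mul_smul_comm, h₂']
    · exact abs_mul_sub_mul_lt hp (hbound hx₀ j).2 (hbound hx i).1 (hbound hx j).2 (hbound hx₀ i).1
  · push Not at hsnd
    have hzero : ratioSpan b z T = ⊥ := Submodule.span_eq_bot.2 fun x hx ↦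
      eq_of_mem_ratioPoints_of_snd_eq hT' hx zero_mem_ratioPoints (hsnd x hx)
    rw [hzero, finrank_bot]
    exact zero_le_one

theorem finrank_ratioSpan_le_one_of_forall_ne {i : ι} (hi : ∀ j ≠ i, T j = 0)
    (hp : 2 * T i ^ 2 < p) : finrank ℤ (ratioSpan b z T) ≤ 1 := by
  have hsnd {q} (hq : q ∈ ratioPoints b z T) (j) (hj : j ≠ i) : q.2 j = 0 := by
    simpa [hi j hj] using ((mem_ratioPoints.1 hq).1 j).2
  refine finrank_ratioSpan_le_one_of_forall_mul_eq_mul (h := T i) (fun j ↦ ?_) hp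
    fun x hx y hy k l ↦ ?_
  · by_cases hj : j = i
    · rw [hj]
    · simp [hi j hj]
  · by_cases hk : k = i
    · by_cases hl : l = i
      · rw [hk, hl]
      · rw [hsnd hx l hl, hsnd hy l hl, zero_mul, mul_zero]
    · rw [hsnd hx k hk, hsnd hy k hk, zero_mul, mul_zero]

theorem coe_aeval_apply_of_coe_apply {K : Type*} [Field K] [Algebra K F] {P : Submodule K F}
    {f : P →ₗ[K] P} (hf : ∀ x, (f x : F) = z * x) (g : Polynomial K) (x : P) :
    (Polynomial.aeval f g x : F) = Polynomial.aeval z g * x := by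
  have hpow (n : ℕ) : ((f ^ n) x : F) = z ^ n * x := by
    induction n with
    | zero => simp
    | succ n ih => rw [pow_succ', Module.End.mul_apply, hf, ih, pow_succ', mul_assoc]
  induction g using Polynomial.induction_on' with
  | add g₁ g₂ h₁ h₂ => simp [h₁, h₂, add_mul]
  | monomial n a => simp [Polynomial.aeval_monomial, hpow, Algebra.smul_def, mul_assoc]

/-- By Cayley–Hamilton, `z` is a root of the characteristic polynomial of multiplication by `z`
on `P`. -/
theorem natDegree_minpoly_le_finrank {K : Type*} [Field K] [Algebra K F] (P : Submodule K F)
    [FiniteDimensional K P] (hP : P ≠ ⊥) (hz : ∀ x ∈ P, z * x ∈ P) :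
    (minpoly K z).natDegree ≤ finrank K P := by
  let f : P →ₗ[K] P := (LinearMap.mulLeft K z).restrict hz
  obtain ⟨x, hx, hx0⟩ := P.exists_mem_ne_zero_of_ne_bot hP
  have hroot : Polynomial.aeval z f.charpoly = 0 := by
    have h0 := coe_aeval_apply_of_coe_apply (f := f) (fun _ ↦ rfl) f.charpoly ⟨x, hx⟩
    rw [LinearMap.aeval_self_charpoly] at h0
    exact (mul_eq_zero.1 h0.symm).resolve_right hx0
  rw [← f.charpoly_natDegree]
  exact Polynomial.natDegree_le_of_dvd (minpoly.dvd _ _ hroot) f.charpoly_monic.ne_zero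

theorem natDegree_minpoly_le_two_of_det_ne_zero {K : Type*} [Field K] [Algebra K F] {e₁ e₂ : F}
    (he₁ : e₁ ≠ 0) {a₁ a₂ c₁ c₂ : K} (hdet : a₁ * c₂ - a₂ * c₁ ≠ 0)
    (ha : z * (a₁ • e₁ + a₂ • e₂) ∈ Submodule.span K {e₁, e₂})
    (hc : z * (c₁ • e₁ + c₂ • e₂) ∈ Submodule.span K {e₁, e₂}) :
    (minpoly K z).natDegree ≤ 2 := by
  let P : Submodule K F := Submodule.span K {e₁, e₂}
  have h₁ : z * e₁ ∈ P := by
    rw [← P.smul_mem_iff hdet]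
    convert P.sub_mem (P.smul_mem c₂ ha) (P.smul_mem a₂ hc) using 1
    simp only [Algebra.smul_def, map_sub, map_mul]
    ring
  have h₂ : z * e₂ ∈ P := by
    rw [← P.smul_mem_iff hdet]
    convert P.sub_mem (P.smul_mem a₁ hc) (P.smul_mem c₁ ha) using 1
    simp only [Algebra.smul_def, map_sub, map_mul]
    ring
  have hP : P ≠ ⊥ := fun hbot ↦ he₁ <| (Submodule.mem_bot K).1 <|
    hbot ▸ Submodule.subset_span (Set.mem_insert e₁ {e₂})
  have hfin : FiniteDimensional K P := FiniteDimensional.span_of_finite K (by simp)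
  calc (minpoly K z).natDegree ≤ finrank K P := natDegree_minpoly_le_finrank P hP fun w hw ↦ by
        obtain ⟨s, t, rfl⟩ := Submodule.mem_span_pair.1 hw
        rw [mul_add, mul_smul_comm, mul_smul_comm]
        exact P.add_mem (P.smul_mem _ h₁) (P.smul_mem _ h₂)
    _ ≤ #({e₁, e₂} : Finset F) := by
        have h := finrank_span_finset_le_card (R := K) ({e₁, e₂} : Finset F)
        rwa [coe_pair] at h
    _ ≤ 2 := card_le_two

theorem intComb_eq_add_of_forall_ne {i j : ι} (hij : i ≠ j) {c : ι → ℤ}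
    (hc : ∀ k, k ≠ i → k ≠ j → c k = 0) :
    intComb b c = (c i : ZMod p) • b i + (c j : ZMod p) • b j := by
  rw [Fintype.linearCombination_apply, Fintype.sum_eq_add i j hij
    fun k ⟨hki, hkj⟩ ↦ by rw [hc k hki hkj, zero_smul], Int.cast_smul_eq_zsmul,
    Int.cast_smul_eq_zsmul]

/-- If the coordinates `x.2`, `y.2` of two points were not proportional, the plane `⟨bᵢ, bⱼ⟩`
would be stable under multiplication by `z`. -/
theorem finrank_ratioSpan_le_one_of_two_lt_natDegree_minpoly [Fact p.Prime] {i j : ι} (hij : i ≠ j)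
    (hsupp : ∀ k, k ≠ i → k ≠ j → T k = 0) (hT : ∀ k, T k ≤ h) (hp : 2 * h ^ 2 < p)
    (hz : 2 < (minpoly (ZMod p) z).natDegree) : finrank ℤ (ratioSpan b z T) ≤ 1 := by
  have hbound {q} (hq : q ∈ ratioPoints b z T) (k : ι) : |q.2 k| ≤ h :=
    ((mem_ratioPoints.1 hq).1 k).2.trans (mod_cast hT k)
  have hzero {q} (hq : q ∈ ratioPoints b z T) (k) (hki : k ≠ i) (hkj : k ≠ j) :
      q.1 k = 0 ∧ q.2 k = 0 := by
    simpa [hsupp k hki hkj] using (mem_ratioPoints.1 hq).1 k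
  have hmul {q} (hq : q ∈ ratioPoints b z T) :
      z * ((q.2 i : ZMod p) • b i + (q.2 j : ZMod p) • b j) ∈
        Submodule.span (ZMod p) {b i, b j} := by
    rw [← intComb_eq_add_of_forall_ne hij fun k hki hkj ↦ (hzero hq k hki hkj).2,
      ← mem_ratioLattice.1 (mem_ratioPoints.1 hq).2,
      intComb_eq_add_of_forall_ne hij fun k hki hkj ↦ (hzero hq k hki hkj).1]
    exact Submodule.mem_span_pair.2 ⟨_, _, rfl⟩
  refine finrank_ratioSpan_le_one_of_forall_mul_eq_mul hT hp fun x hx y hy k l ↦ ?_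
  have hdet : x.2 i * y.2 j = x.2 j * y.2 i := by
    by_contra hne
    refine hz.not_ge (natDegree_minpoly_le_two_of_det_ne_zero (b.ne_zero i) (fun hD ↦ hne ?_)
      (hmul hx) (hmul hy))
    exact sub_eq_zero.1 <| Int.eq_zero_of_abs_lt_dvd
      ((ZMod.intCast_zmod_eq_zero_iff_dvd _ _).1 (mod_cast hD))
      (abs_mul_sub_mul_lt hp (hbound hx i) (hbound hy j) (hbound hx j) (hbound hy i))
  by_cases hk : k = i ∨ k = j
  · by_cases hl : l = i ∨ l = j
    · rcases hk with rfl | rfl <;> rcases hl with rfl | rfl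
      exacts [rfl, hdet, hdet.symm, rfl]
    · rw [not_or] at hl
      rw [(hzero hx l hl.1 hl.2).2, (hzero hy l hl.1 hl.2).2, zero_mul, mul_zero]
  · rw [not_or] at hk
    rw [(hzero hx k hk.1 hk.2).2, (hzero hy k hk.1 hk.2).2, zero_mul, mul_zero]

theorem two_lt_natDegree_minpoly_of_notMem_range [Fact p.Prime] (hF : finrank (ZMod p) F = 3)
    (hz : z ∉ (algebraMap (ZMod p) F).range) : 2 < (minpoly (ZMod p) z).natDegree := by
  have : FiniteDimensional (ZMod p) F := FiniteDimensional.of_finrank_pos (by omega)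
  have hint : IsIntegral (ZMod p) z := IsIntegral.of_finite _ z
  have hdvd : (minpoly (ZMod p) z).natDegree ∣ 3 := hF ▸ minpoly.degree_dvd hint
  have hone : (minpoly (ZMod p) z).natDegree ≠ 1 := mt minpoly.natDegree_eq_one_iff.1 hz
  have := (Nat.dvd_prime Nat.prime_three).1 hdvd
  omega

end RankOne

section Restrict

theorem card_le_card_mul_card_of_sub_mem {M α : Type*} [AddGroup M] {A B : Finset M}
    {t : Finset α} {f : M → α} (hf : ∀ x ∈ A, f x ∈ t)
    (hsub : ∀ x ∈ A, ∀ y ∈ A, f x = f y → x - y ∈ B) : #A ≤ #B * #t := by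
  refine card_le_mul_card_image_of_maps_to hf _ fun c _ ↦ ?_
  obtain hempty | ⟨y, hy⟩ := {x ∈ A | f x = c}.eq_empty_or_nonempty
  · simp [hempty]
  · rw [mem_filter] at hy
    refine card_le_card_of_injOn (· - y) (fun x hx ↦ ?_) (sub_left_injective (b := y)).injOn
    have hx := mem_filter.1 hx
    exact hsub x hx.1 y hy.1 (hx.2.trans hy.2.symm)

theorem abs_sub_le_of_nonneg_iff {a b n : ℤ} (ha : |a| ≤ n) (hb : |b| ≤ n)
    (h : 0 ≤ a ↔ 0 ≤ b) : |a - b| ≤ n := by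
  rw [abs_le] at *
  omega

/-- The difference of two points with the same `i`-th coordinates and the same signs in all other
coordinates lies in the box with half-sides `Function.update T i 0`. -/
theorem card_ratioPoints_le_card_update_mul {ι R : Type*} [Fintype ι] [DecidableEq ι]
    [CommRing R] (ω : ι → R) (z : R) (T : ι → ℕ) (i : ι) :
    #(ratioPoints ω z T) ≤
      #(ratioPoints ω z (Function.update T i 0)) * (4 ^ Fintype.card ι * (2 * T i + 1) ^ 2) := by
  let I : Finset ℤ := Icc (-(T i : ℤ)) (T i)
  have hcard : #((I ×ˢ I) ×ˢ (univ : Finset ((ι → Prop) × (ι → Prop)))) =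
      4 ^ Fintype.card ι * (2 * T i + 1) ^ 2 := by
    simp only [card_product, card_univ, Fintype.card_prod, Fintype.card_pi, Fintype.card_prop,
      prod_const, I, card_Icc_neg_self]
    rw [← mul_pow, sq, mul_comm]
    norm_num
  rw [← hcard]
  refine card_le_card_mul_card_of_sub_mem
    (f := fun q ↦ ((q.1 i, q.2 i), (fun j ↦ 0 ≤ q.1 j, fun j ↦ 0 ≤ q.2 j)))
    (fun q hq ↦ ?_) fun x hx y hy hxy ↦ ?_
  · have hbound := (mem_ratioPoints.1 hq).1 i
    simpa [I] using hbound.imp abs_le.1 abs_le.1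
  · simp only [Prod.mk.injEq, funext_iff, eq_iff_iff] at hxy
    obtain ⟨⟨hu, hv⟩, hu_sign, hv_sign⟩ := hxy
    rw [mem_ratioPoints] at hx hy ⊢
    refine ⟨fun j ↦ ?_, sub_mem hx.2 hy.2⟩
    obtain rfl | hj := eq_or_ne j i
    · simp [hu, hv]
    · rw [Function.update_of_ne hj]
      exact ⟨abs_sub_le_of_nonneg_iff (hx.1 j).1 (hy.1 j).1 (hu_sign j),
        abs_sub_le_of_nonneg_iff (hx.1 j).2 (hy.1 j).2 (hv_sign j)⟩

variable {p : ℕ} {ι R : Type*} [Fintype ι] [DecidableEq ι] [CommRing R] [Algebra (ZMod p) R]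
  {b : Basis ι (ZMod p) R} {T : ι → ℕ} {a : ZMod p}

theorem card_ratioPoints_algebraMap_le_card_update_mul (hT : ∀ i, 2 * T i < p) (i : ι) :
    #(ratioPoints b (algebraMap (ZMod p) R a) T) ≤
      #(ratioPoints b (algebraMap (ZMod p) R a) (Function.update T i 0)) * (2 * T i + 1) := by
  rw [← card_Icc_neg_self, ← card_product]
  refine card_le_card_of_injOn
    (fun q ↦ ((Function.update q.1 i 0, Function.update q.2 i 0), q.2 i))
    (fun q hq ↦ ?_) fun x hx y hy hxy ↦ ?_
  · rw [mem_coe, mem_ratioPoints, mem_ratioLattice_algebraMap] at hq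
    rw [mem_coe, mem_product, mem_Icc, mem_ratioPoints, mem_ratioLattice_algebraMap]
    refine ⟨⟨fun j ↦ ?_, fun j ↦ ?_⟩, abs_le.1 (hq.1 i).2⟩
    all_goals obtain rfl | hj := eq_or_ne j i
    · simp
    · simpa [hj] using hq.1 j
    · simp
    · simpa [hj] using hq.2 j
  · simp only [Prod.mk.injEq] at hxy
    refine eq_of_mem_ratioPoints_of_snd_eq hT hx hy (funext fun j ↦ ?_)
    obtain rfl | hj := eq_or_ne j i
    · exact hxy.2
    · simpa [hj] using congrFun hxy.1.2 j

theorem one_lt_card_ratioPoints_algebraMap_single {i : ι} (hT : ∀ j, T j ≤ T i)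
    (h : 1 < #(ratioPoints b (algebraMap (ZMod p) R a) T)) :
    1 < #(ratioPoints b (algebraMap (ZMod p) R a) (Pi.single i (T i))) := by
  obtain ⟨q, hq, hq0⟩ := one_lt_card_ratioPoints.1 h
  rw [mem_ratioPoints, mem_ratioLattice_algebraMap] at hq
  obtain ⟨j, hj⟩ : ∃ j, (q.1 j, q.2 j) ≠ (0, 0) := by
    by_contra! hzero
    simp only [Prod.mk.injEq] at hzero
    exact hq0 (Prod.ext (funext fun j ↦ (hzero j).1) (funext fun j ↦ (hzero j).2))
  refine one_lt_card_ratioPoints.2 ⟨(Pi.single i (q.1 j), Pi.single i (q.2 j)), ?_, fun h0 ↦ hj ?_⟩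
  · rw [mem_ratioPoints, mem_ratioLattice_algebraMap]
    have hle : (T j : ℤ) ≤ T i := mod_cast hT j
    refine ⟨fun k ↦ ?_, fun k ↦ ?_⟩
    all_goals obtain rfl | hk := eq_or_ne k i
    · simpa using (hq.1 j).imp (·.trans hle) (·.trans hle)
    · simp [hk]
    · simpa using hq.2 j
    · simp [hk]
  · exact Prod.ext (by simpa using congrFun (congrArg Prod.fst h0) i)
      (by simpa using congrFun (congrArg Prod.snd h0) i)

end Restrict

section BohrSet

variable {R : Type*} [CommRing R] [Fintype R] {ψ : AddChar R ℂ}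

theorem sum_norm_sum_addChar_sq (hψ : ψ.IsPrimitive) (X : Finset R) :
    ∑ η, ‖∑ x ∈ X, ψ (η * x)‖ ^ 2 = (Fintype.card R * #X : ℝ) := by
  have hexpand (η : R) : ((‖∑ x ∈ X, ψ (η * x)‖ ^ 2 : ℝ) : ℂ) =
      ∑ x ∈ X, ∑ y ∈ X, ψ (η * (x - y)) := by
    rw [Complex.ofReal_pow, ← Complex.mul_conj', map_sum, sum_mul_sum]
    refine sum_congr rfl fun x _ ↦ sum_congr rfl fun y _ ↦ ?_
    rw [← AddChar.map_neg_eq_conj, ← AddChar.map_add_eq_mul, ← sub_eq_add_neg, mul_sub]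
  have horth (x) (hx : x ∈ X) : ∑ η, ∑ y ∈ X, ψ (η * (x - y)) = Fintype.card R := by
    rw [sum_comm]
    simp only [AddChar.sum_mulShift _ hψ, sub_eq_zero, Nat.cast_ite, Nat.cast_zero, sum_ite_eq, hx,
      if_true]
  suffices h : ∑ η, ((‖∑ x ∈ X, ψ (η * x)‖ ^ 2 : ℝ) : ℂ) = Fintype.card R * #X from mod_cast h
  simp only [hexpand]
  rw [sum_comm, sum_congr rfl horth, sum_const, nsmul_eq_mul, mul_comm]

/-- The character sum over `X` has modulus at least `#X / 2` at each `η ∈ Y`; compare with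
Parseval. -/
theorem card_mul_card_le_of_half_le_re (hψ : ψ.IsPrimitive) {X Y : Finset R}
    (h : ∀ η ∈ Y, ∀ x ∈ X, 1 / 2 ≤ (ψ (η * x)).re) : #Y * #X ≤ 4 * Fintype.card R := by
  obtain rfl | hX := X.eq_empty_or_nonempty
  · simp
  have hlow (η) (hη : η ∈ Y) : ((#X : ℝ) / 2) ^ 2 ≤ ‖∑ x ∈ X, ψ (η * x)‖ ^ 2 := by
    refine pow_le_pow_left₀ (by positivity) (le_trans ?_ (Complex.re_le_norm _)) 2
    rw [Complex.re_sum, div_eq_mul_one_div, ← nsmul_eq_mul]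
    exact card_nsmul_le_sum _ _ _ (h η hη)
  have hsum : (#Y : ℝ) * (#X / 2) ^ 2 ≤ Fintype.card R * #X := by
    calc (#Y : ℝ) * (#X / 2) ^ 2 ≤ ∑ η ∈ Y, ‖∑ x ∈ X, ψ (η * x)‖ ^ 2 := by
          rw [← nsmul_eq_mul]
          exact card_nsmul_le_sum _ _ _ hlow
      _ ≤ ∑ η, ‖∑ x ∈ X, ψ (η * x)‖ ^ 2 :=
          sum_le_sum_of_subset_of_nonneg (subset_univ _) fun _ _ _ ↦ by positivity
      _ = Fintype.card R * #X := sum_norm_sum_addChar_sq hψ X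
  have hX' : (0 : ℝ) < #X := mod_cast hX.card_pos
  have hle : (#Y * #X : ℝ) ≤ 4 * Fintype.card R := by
    refine le_of_mul_le_mul_right ?_ hX'
    linarith
  exact_mod_cast hle

theorem half_le_re_stdAddChar {p : ℕ} [NeZero p] {k : ℤ} (hk : 6 * |k| ≤ p) :
    1 / 2 ≤ (ZMod.stdAddChar (k : ZMod p)).re := by
  have hp : (0 : ℝ) < p := mod_cast NeZero.pos p
  have hk' : 6 * |(k : ℝ)| ≤ p := mod_cast hk
  have harg : 2 * (Real.pi : ℂ) * Complex.I * k / p =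
      ((2 * Real.pi * k / p : ℝ) : ℂ) * Complex.I := by
    push_cast
    ring
  rw [ZMod.stdAddChar_coe, harg, Complex.exp_ofReal_mul_I_re, ← Real.cos_pi_div_three,
    ← Real.cos_abs (2 * Real.pi * k / p)]
  refine Real.cos_le_cos_of_nonneg_of_le_pi (abs_nonneg _) (by linarith [Real.pi_pos]) ?_
  rw [abs_div, abs_mul, abs_of_pos hp, abs_of_pos Real.two_pi_pos,
    div_le_div_iff₀ hp three_pos]
  nlinarith [Real.pi_pos]

/-- The additive character `x ↦ exp (2πi Tr(x) / p)` of a finite field of characteristic `p`. -/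
noncomputable def traceAddChar (p : ℕ) [Fact p.Prime] (F : Type*) [Field F]
    [Algebra (ZMod p) F] : AddChar F ℂ :=
  (ZMod.stdAddChar (N := p)).compAddMonoidHom (Algebra.trace (ZMod p) F).toAddMonoidHom

theorem isPrimitive_traceAddChar (p : ℕ) [Fact p.Prime] (F : Type*) [Field F] [Finite F]
    [Algebra (ZMod p) F] : (traceAddChar p F).IsPrimitive := by
  obtain rfl : p = ringChar F := by
    have : CharP F p := (Algebra.charP_iff (ZMod p) F p).1 inferInstance
    exact (ringChar.eq F p).symm
  obtain ⟨x, hx⟩ := FiniteField.trace_to_zmod_nondegenerate F one_ne_zero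
  rw [one_mul] at hx
  exact AddChar.IsPrimitive.of_ne_one <| AddChar.ne_one_iff.2
    ⟨x, fun h ↦ hx (ZMod.injective_stdAddChar (h.trans (AddChar.map_zero_eq_one _).symm))⟩

end BohrSet

section Duality

variable {ι : Type*} [Fintype ι]

/-- The pairing `u ⬝ b - v ⬝ a` of `(u, v)` and `(a, b)`, under which the lattices of `z` for a
basis and for its dual basis are orthogonal modulo `p`. -/
def latticePairing (ι : Type*) [Fintype ι] :
    ((ι → ℤ) × (ι → ℤ)) →ₗ[ℤ] ((ι → ℤ) × (ι → ℤ)) →ₗ[ℤ] ℤ :=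
  (dotProductBilin ℤ ℤ).compl₁₂ (LinearMap.fst ℤ _ _) (LinearMap.snd ℤ _ _) -
    (dotProductBilin ℤ ℤ).compl₁₂ (LinearMap.snd ℤ _ _) (LinearMap.fst ℤ _ _)

theorem latticePairing_apply (x y : (ι → ℤ) × (ι → ℤ)) :
    latticePairing ι x y = x.1 ⬝ᵥ y.2 - x.2 ⬝ᵥ y.1 := rfl

/-- `(u, v)` pairs with `(-v, u)` to `|u| ^ 2 + |v| ^ 2`, so rotating `M` makes it disjoint from
`L`. -/
theorem finrank_add_finrank_le_of_latticePairing_eq_zero {L M : Submodule ℤ ((ι → ℤ) × (ι → ℤ))}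
    (h : ∀ x ∈ L, ∀ y ∈ M, latticePairing ι x y = 0) :
    finrank ℤ L + finrank ℤ M ≤ 2 * Fintype.card ι := by
  let rot : ((ι → ℤ) × (ι → ℤ)) →ₗ[ℤ] ((ι → ℤ) × (ι → ℤ)) :=
    (LinearMap.snd ℤ _ _).prod (-LinearMap.fst ℤ _ _)
  have hinj : Function.Injective (L.subtype.coprod (rot ∘ₗ M.subtype)) := by
    rw [← LinearMap.ker_eq_bot, LinearMap.ker_eq_bot']
    rintro ⟨⟨x, hx⟩, ⟨y, hy⟩⟩ h0
    have hfst : y.2 = -x.1 := (neg_eq_of_add_eq_zero_right (congrArg Prod.fst h0)).symm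
    have hsnd : y.1 = x.2 := (eq_of_sub_eq_zero ((sub_eq_add_neg _ _).trans
      (congrArg Prod.snd h0))).symm
    have hpair := h x hx y hy
    rw [latticePairing_apply, hfst, hsnd, dotProduct_neg] at hpair
    have hnonneg (c : ι → ℤ) : 0 ≤ c ⬝ᵥ c := sum_nonneg fun i _ ↦ mul_self_nonneg (c i)
    have hx₁ : x.1 = 0 := dotProduct_self_eq_zero.1 (by linarith [hnonneg x.1, hnonneg x.2])
    have hx₂ : x.2 = 0 := dotProduct_self_eq_zero.1 (by linarith [hnonneg x.1, hnonneg x.2])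
    rw [hx₁, neg_zero] at hfst
    rw [hx₂] at hsnd
    exact Prod.ext (Subtype.ext (Prod.ext hx₁ hx₂)) (Subtype.ext (Prod.ext hsnd hfst))
  have hle := LinearMap.finrank_le_finrank_of_injective hinj
  rwa [finrank_prod, finrank_prod, finrank_fintype_fun_eq_card, ← two_mul] at hle

/-- Half-sides of the box dual to the one with half-sides `H`: the pairing of points of the two
boxes is at most `p / 6` in absolute value. -/
def dualSide (p : ℕ) (H : ι → ℕ) (i : ι) : ℕ := p / (12 * Fintype.card ι * H i)

theorem mul_mul_dualSide_le (p : ℕ) (H : ι → ℕ) (i : ι) :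
    12 * Fintype.card ι * (H i * dualSide p H i) ≤ p := by
  rw [← mul_assoc]
  exact Nat.mul_div_le p _

theorem le_prod_dualSide_add_one (p : ℕ) (H : ι → ℕ) :
    (p : ℝ) ^ Fintype.card ι / ((12 * Fintype.card ι) ^ Fintype.card ι * ∏ i, (H i : ℝ)) ≤
      ∏ i, ((dualSide p H i : ℝ) + 1) := by
  have hside (i) : (p : ℝ) / (12 * Fintype.card ι * H i) ≤ dualSide p H i + 1 := by
    have := (Nat.lt_floor_add_one ((p : ℝ) / (12 * Fintype.card ι * H i : ℕ))).le
    rw [Nat.floor_div_eq_div] at this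
    exact_mod_cast this
  calc (p : ℝ) ^ Fintype.card ι / ((12 * Fintype.card ι) ^ Fintype.card ι * ∏ i, (H i : ℝ))
      = ∏ i, (p : ℝ) / (12 * Fintype.card ι * H i) := by
        simp only [prod_div_distrib, prod_mul_distrib, prod_const, card_univ, mul_pow]
    _ ≤ ∏ i, ((dualSide p H i : ℝ) + 1) :=
        prod_le_prod (fun _ _ ↦ by positivity) fun i _ ↦ hside i

theorem six_mul_abs_latticePairing_le {p : ℕ} {H : ι → ℕ} {x y : (ι → ℤ) × (ι → ℤ)}
    (hx : ∀ i, |x.1 i| ≤ H i ∧ |x.2 i| ≤ H i)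
    (hy : ∀ i, |y.1 i| ≤ dualSide p H i ∧ |y.2 i| ≤ dualSide p H i) :
    6 * |latticePairing ι x y| ≤ p := by
  have hterm {m n : ℤ} {i : ι} (hm : |m| ≤ H i) (hn : |n| ≤ dualSide p H i) :
      12 * Fintype.card ι * |m * n| ≤ p := by
    calc 12 * Fintype.card ι * |m * n| = 12 * Fintype.card ι * (|m| * |n|) := by rw [abs_mul]
      _ ≤ 12 * Fintype.card ι * (H i * dualSide p H i) := by gcongr
      _ ≤ p := mod_cast mul_mul_dualSide_le p H i
  have hdot {u a : ι → ℤ} (hu : ∀ i, |u i| ≤ H i) (ha : ∀ i, |a i| ≤ dualSide p H i) :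
      12 * |u ⬝ᵥ a| ≤ p := by
    obtain _ | _ := isEmpty_or_nonempty ι
    · simp [dotProduct]
    have hsum := sum_le_card_nsmul univ _ _ fun i _ ↦ hterm (hu i) (ha i)
    rw [← mul_sum, nsmul_eq_mul, card_univ] at hsum
    have hcard : (0 : ℤ) < Fintype.card ι := mod_cast Fintype.card_pos
    refine le_of_mul_le_mul_left (le_trans ?_ hsum) hcard
    have := abs_sum_le_sum_abs (fun i ↦ u i * a i) univ
    rw [mul_left_comm, ← mul_assoc]
    gcongr
    exact this
  rw [latticePairing_apply]
  linarith [abs_sub (x.1 ⬝ᵥ y.2) (x.2 ⬝ᵥ y.1), hdot (fun i ↦ (hx i).1) fun i ↦ (hy i).2,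
    hdot (fun i ↦ (hx i).2) fun i ↦ (hy i).1]

end Duality

section Transference

/-- The elements `z * ∑ vᵢ ωᵢ - ∑ uᵢ ωᵢ` with integral `0 ≤ uᵢ, vᵢ ≤ T i`. For the dual basis and
`T = dualSide p H` this is a Bohr set for the elements `∑ vᵢ ωᵢ`, `(u, v) ∈ ratioPoints ω z H`. -/
noncomputable def mulSubValues {ι R : Type*} [Fintype ι] [CommRing R] (ω : ι → R) (z : R)
    (T : ι → ℕ) : Finset R :=
  (Icc 0 (fun i ↦ (T i : ℤ)) ×ˢ Icc 0 (fun i ↦ (T i : ℤ))).image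
    fun q ↦ z * intComb ω q.2 - intComb ω q.1

theorem mem_mulSubValues {ι R : Type*} [Fintype ι] [CommRing R] {ω : ι → R} {z : R} {T : ι → ℕ}
    {η : R} : η ∈ mulSubValues ω z T ↔ ∃ q : (ι → ℤ) × (ι → ℤ),
      (∀ i, (0 ≤ q.1 i ∧ q.1 i ≤ T i) ∧ 0 ≤ q.2 i ∧ q.2 i ≤ T i) ∧
        z * intComb ω q.2 - intComb ω q.1 = η := by
  simp only [mulSubValues, mem_image, mem_product, mem_Icc, Pi.le_def, Pi.zero_apply, forall_and]

theorem prod_sq_le_card_ratioPoints_mul_card_mulSubValues {ι R : Type*} [Fintype ι] [CommRing R]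
    (ω : ι → R) (z : R) (T : ι → ℕ) :
    (∏ i, (T i + 1)) ^ 2 ≤ #(ratioPoints ω z T) * #(mulSubValues ω z T) := by
  have hcard : #(Icc 0 fun i ↦ (T i : ℤ)) = ∏ i, (T i + 1) := by
    rw [Pi.card_Icc]
    refine prod_congr rfl fun i _ ↦ ?_
    rw [Int.card_Icc, Pi.zero_apply]
    omega
  rw [← hcard, sq, ← card_product]
  refine card_le_card_mul_card_of_sub_mem (fun q ↦ mem_image_of_mem _) fun x hx y hy hxy ↦ ?_
  rw [mem_product, mem_Icc, mem_Icc] at hx hy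
  refine mem_ratioPoints.2 ⟨fun i ↦ ⟨?_, ?_⟩, mem_ratioLattice.2 ?_⟩
  · exact abs_sub_le_of_nonneg_of_le (hx.1.1 i) (hx.1.2 i) (hy.1.1 i) (hy.1.2 i)
  · exact abs_sub_le_of_nonneg_of_le (hx.2.1 i) (hx.2.2 i) (hy.2.1 i) (hy.2.2 i)
  · rw [Prod.fst_sub, Prod.snd_sub, map_sub, map_sub]
    linear_combination -hxy

variable {p : ℕ} [Fact p.Prime] {ι F : Type*} [Fintype ι] [DecidableEq ι] [Field F] [Finite F]
  [Algebra (ZMod p) F] {b : Basis ι (ZMod p) F} {z : F} {H : ι → ℕ}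

theorem trace_intComb_mul_intComb_traceDual (u a : ι → ℤ) :
    Algebra.trace (ZMod p) F (intComb b u * intComb b.traceDual a) = (u ⬝ᵥ a : ℤ) := by
  simp only [Fintype.linearCombination_apply, sum_mul_sum, smul_mul_smul_comm, map_sum,
    map_zsmul, Basis.trace_mul_traceDual]
  simp [dotProduct]

theorem trace_mul_intComb_eq_latticePairing {x : (ι → ℤ) × (ι → ℤ)} (hx : x ∈ ratioLattice b z)
    (y : (ι → ℤ) × (ι → ℤ)) :
    Algebra.trace (ZMod p) F ((z * intComb b.traceDual y.2 - intComb b.traceDual y.1) *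
      intComb b x.2) = (latticePairing ι x y : ℤ) := by
  have hexpand : (z * intComb b.traceDual y.2 - intComb b.traceDual y.1) * intComb b x.2 =
      intComb b x.1 * intComb b.traceDual y.2 - intComb b x.2 * intComb b.traceDual y.1 := by
    rw [mem_ratioLattice.1 hx]
    ring
  rw [hexpand, map_sub, trace_intComb_mul_intComb_traceDual, trace_intComb_mul_intComb_traceDual,
    latticePairing_apply, Int.cast_sub]

theorem latticePairing_eq_zero_of_mem_ratioPoints {x y : (ι → ℤ) × (ι → ℤ)}
    (hx : x ∈ ratioPoints b z H) (hy : y ∈ ratioPoints b.traceDual z (dualSide p H)) :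
    latticePairing ι x y = 0 := by
  rw [mem_ratioPoints] at hx hy
  have hp : 0 < p := NeZero.pos p
  have hbound := six_mul_abs_latticePairing_le hx.1 hy.1
  refine Int.eq_zero_of_abs_lt_dvd (m := p) ?_ (by omega)
  rw [← ZMod.intCast_zmod_eq_zero_iff_dvd, ← trace_mul_intComb_eq_latticePairing hx.2,
    ← mem_ratioLattice.1 hy.2, sub_self, zero_mul, map_zero]

theorem finrank_ratioSpan_add_finrank_ratioSpan_traceDual_le :
    finrank ℤ (ratioSpan b z H) + finrank ℤ (ratioSpan b.traceDual z (dualSide p H)) ≤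
      2 * Fintype.card ι := by
  refine finrank_add_finrank_le_of_latticePairing_eq_zero fun x hx y hy ↦ ?_
  have hgen : ∀ x ∈ (ratioPoints b z H : Set ((ι → ℤ) × (ι → ℤ))),
      ∀ y ∈ (ratioPoints b.traceDual z (dualSide p H) : Set ((ι → ℤ) × (ι → ℤ))),
      latticePairing ι x y ∈ (⊥ : Submodule ℤ ℤ) := fun x hx y hy ↦
    (Submodule.mem_bot ℤ).2 (latticePairing_eq_zero_of_mem_ratioPoints hx hy)
  exact (Submodule.mem_bot ℤ).1
    (LinearMap.BilinMap.apply_apply_mem_of_mem_span ⊥ _ _ _ hgen x y hx hy)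

theorem card_mulSubValues_traceDual_mul_card_ratioPoints_le [Fintype F]
    (hH : ∀ i, 2 * H i < p) :
    #(mulSubValues b.traceDual z (dualSide p H)) * #(ratioPoints b z H) ≤
      4 * Fintype.card F := by
  rw [← card_image_of_injOn (injOn_intComb_snd (b := b) (z := z) hH)]
  refine card_mul_card_le_of_half_le_re (isPrimitive_traceAddChar p F) fun η hη x hx ↦ ?_
  obtain ⟨y, hy, rfl⟩ := mem_mulSubValues.1 hη
  obtain ⟨q, hq, rfl⟩ := mem_image.1 hx
  rw [mem_ratioPoints] at hq
  change 1 / 2 ≤ (ZMod.stdAddChar (Algebra.trace (ZMod p) F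
    ((z * intComb b.traceDual y.2 - intComb b.traceDual y.1) * intComb b q.2))).re
  rw [trace_mul_intComb_eq_latticePairing hq.2]
  refine half_le_re_stdAddChar (six_mul_abs_latticePairing_le hq.1 fun i ↦ ?_)
  rw [abs_of_nonneg (hy i).1.1, abs_of_nonneg (hy i).2.1]
  exact ⟨(hy i).1.2, (hy i).2.2⟩

theorem card_ratioPoints_mul_prod_dualSide_sq_le [Fintype F] (hH : ∀ i, 2 * H i < p) :
    #(ratioPoints b z H) * (∏ i, (dualSide p H i + 1)) ^ 2 ≤
      4 * Fintype.card F * #(ratioPoints b.traceDual z (dualSide p H)) := by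
  have hlow := prod_sq_le_card_ratioPoints_mul_card_mulSubValues b.traceDual z (dualSide p H)
  have hupp := card_mulSubValues_traceDual_mul_card_ratioPoints_le (b := b) (z := z) hH
  calc #(ratioPoints b z H) * (∏ i, (dualSide p H i + 1)) ^ 2
      ≤ #(ratioPoints b z H) * (#(ratioPoints b.traceDual z (dualSide p H)) *
          #(mulSubValues b.traceDual z (dualSide p H))) := Nat.mul_le_mul_left _ hlow
    _ = #(mulSubValues b.traceDual z (dualSide p H)) * #(ratioPoints b z H) *
          #(ratioPoints b.traceDual z (dualSide p H)) := by ring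
    _ ≤ 4 * Fintype.card F * #(ratioPoints b.traceDual z (dualSide p H)) :=
        Nat.mul_le_mul_right _ hupp

theorem card_ratioPoints_le_mul_card_ratioPoints_traceDual (hH : ∀ i, 1 ≤ H i)
    (hp : ∀ i, 2 * H i < p) :
    (#(ratioPoints b z H) : ℝ) ≤
      4 * (12 * Fintype.card ι) ^ (2 * Fintype.card ι) *
        ((∏ i, (H i : ℝ)) ^ 2 / p ^ Fintype.card ι) *
          #(ratioPoints b.traceDual z (dualSide p H)) := by
  have := Fintype.ofFinite F
  have hp₀ : (0 : ℝ) < p := mod_cast NeZero.pos p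
  have hH₀ : 0 < ∏ i, (H i : ℝ) := prod_pos fun i _ ↦ mod_cast hH i
  have : Nonempty ι := b.index_nonempty
  have : (0 : ℝ) < Fintype.card ι := mod_cast Fintype.card_pos
  have hF : Fintype.card F = p ^ Fintype.card ι := by rw [card_fintype b, ZMod.card]
  have htransfer : (#(ratioPoints b z H) : ℝ) * (∏ i, ((dualSide p H i : ℝ) + 1)) ^ 2 ≤
      4 * p ^ Fintype.card ι * #(ratioPoints b.traceDual z (dualSide p H)) := by
    have := card_ratioPoints_mul_prod_dualSide_sq_le (b := b) (z := z) hp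
    rw [hF] at this
    exact_mod_cast this
  have hlow := (mul_le_mul_of_nonneg_left (pow_le_pow_left₀ (by positivity)
    (le_prod_dualSide_add_one p H) 2) (Nat.cast_nonneg _)).trans htransfer
  rw [← le_div_iff₀ (by positivity)] at hlow
  refine hlow.trans_eq ?_
  rw [mul_comm 2, pow_mul]
  field_simp

end Transference

section Energy

/-- The pairs of elements of `B` with quotient `z` and nonzero denominator. -/
noncomputable def ratioPairs {F : Type*} [Field F] (B : Finset F) (z : F) : Finset (F × F) :=
  {q ∈ {q ∈ B ×ˢ B | q.2 ≠ 0} | q.1 / q.2 = z}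

theorem mem_ratioPairs {F : Type*} [Field F] {B : Finset F} {z : F} {q : F × F} :
    q ∈ ratioPairs B z ↔ ((q.1 ∈ B ∧ q.2 ∈ B) ∧ q.2 ≠ 0) ∧ q.1 / q.2 = z := by
  simp only [ratioPairs, mem_filter, mem_product]

theorem card_filter_mul_eq_zero_le {R : Type*} [MulZeroClass R] [NoZeroDivisors R]
    (B : Finset R) : #{q ∈ B ×ˢ B | q.1 * q.2 = 0} ≤ 2 * #B := by
  have hsub : {q ∈ B ×ˢ B | q.1 * q.2 = 0} ⊆ {0} ×ˢ B ∪ B ×ˢ {0} := by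
    intro q hq
    simp only [mem_filter, mem_product, mul_eq_zero] at hq
    simp only [mem_union, mem_product, mem_singleton]
    tauto
  refine (card_le_card hsub).trans ((card_union_le _ _).trans (le_of_eq ?_))
  simp [two_mul]

theorem mulEnergy_self_eq_card_filter {α : Type*} [Mul α] (B : Finset α) :
    mulEnergy B B = #{q ∈ B ×ˢ B ×ˢ B ×ˢ B | q.1 * q.2.1 = q.2.2.1 * q.2.2.2} := by
  rw [Finset.mulEnergy_eq_card_filter]
  exact card_equiv (Equiv.prodAssoc α α (α × α)) (by simp [and_assoc])

variable {F : Type*} [Field F] [Fintype F]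

theorem sum_card_ratioPairs_le (B : Finset F) : ∑ z, #(ratioPairs B z) ≤ #B ^ 2 := by
  calc ∑ z, #(ratioPairs B z) = #{q ∈ B ×ˢ B | q.2 ≠ 0} :=
        (card_eq_sum_card_fiberwise fun _ _ ↦ mem_coe.2 (mem_univ _)).symm
    _ ≤ #B ^ 2 := by
        rw [sq, ← card_product]
        exact card_filter_le _ _

/-- A quadruple with nonzero products `x₁ y₁ = x₂ y₂` consists of two pairs `(x₁, x₂)`, `(y₂, y₁)`
of equal quotients. -/
theorem mulEnergy_le_four_mul_card_sq_add_sum_ratioPairs (B : Finset F) :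
    mulEnergy B B ≤ 4 * #B ^ 2 + ∑ z, #(ratioPairs B z) ^ 2 := by
  rw [mulEnergy, ← card_filter_add_card_filter_not (fun x ↦ x.1.1 * x.2.1 = 0)]
  refine add_le_add ?_ ?_
  · calc _ ≤ #({q ∈ B ×ˢ B | q.1 * q.2 = 0} ×ˢ {q ∈ B ×ˢ B | q.1 * q.2 = 0}) := by
          refine card_le_card_of_injOn (Equiv.prodProdProdComm F F F F) (fun x hx ↦ ?_)
            (Equiv.injective _).injOn
          simp only [coe_filter, mem_filter, mem_product, Set.mem_ofPred_eq] at hx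
          simp only [coe_product, coe_filter, mem_product, Set.mem_prod, Set.mem_ofPred_eq,
            Equiv.prodProdProdComm_apply]
          exact ⟨⟨⟨hx.1.1.1.1, hx.1.1.2.1⟩, hx.2⟩, ⟨hx.1.1.1.2, hx.1.1.2.2⟩,
            hx.1.2.symm.trans hx.2⟩
      _ ≤ (2 * #B) * (2 * #B) := by
          rw [card_product]
          exact Nat.mul_le_mul (card_filter_mul_eq_zero_le B) (card_filter_mul_eq_zero_le B)
      _ = 4 * #B ^ 2 := by ring
  · simp only [sq, ← card_product, ← card_sigma]
    refine card_le_card_of_injOn (fun x ↦ (⟨x.1.1 / x.1.2, x.1, x.2.swap⟩ : (_ : F) × _))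
      (fun x hx ↦ ?_) ?_
    · simp only [coe_filter, mem_filter, mem_product, Set.mem_ofPred_eq] at hx
      obtain ⟨⟨⟨⟨hx₁, hx₂⟩, hy₁, hy₂⟩, hxy⟩, hne⟩ := hx
      obtain ⟨-, hy₁0⟩ := mul_ne_zero_iff.1 hne
      obtain ⟨hx₂0, -⟩ := mul_ne_zero_iff.1 (hxy ▸ hne)
      simp only [coe_sigma, Set.mem_sigma_iff, coe_univ, Set.mem_univ, true_and, mem_coe,
        mem_product, mem_ratioPairs, Prod.fst_swap, Prod.snd_swap, and_true]
      refine ⟨⟨⟨hx₁, hx₂⟩, hx₂0⟩, ⟨⟨hy₂, hy₁⟩, hy₁0⟩, ?_⟩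
      rw [div_eq_div_iff hy₁0 hx₂0, hxy, mul_comm]
    · rintro ⟨x, y⟩ - ⟨x', y'⟩ - heq
      simp only [Sigma.mk.injEq, heq_eq_eq, Prod.mk.injEq, Prod.swap_inj] at heq
      exact Prod.ext heq.2.1 heq.2.2

theorem mulEnergy_le_five_mul_card_sq_add_sum {B : Finset F} {g : F → ℕ}
    (hg : ∀ z, #(ratioPairs B z) ≤ g z) :
    mulEnergy B B ≤ 5 * #B ^ 2 + ∑ z with 1 < g z, g z ^ 2 := by
  have hle : ∑ z, #(ratioPairs B z) ^ 2 ≤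
      ∑ z with 1 < g z, g z ^ 2 + ∑ z, #(ratioPairs B z) := by
    rw [sum_filter, ← sum_add_distrib]
    refine sum_le_sum fun z _ ↦ ?_
    split_ifs with hz
    · exact (Nat.pow_le_pow_left (hg z) 2).trans (Nat.le_add_right _ _)
    · have := hg z
      nlinarith
  linarith [sum_card_ratioPairs_le B, mulEnergy_le_four_mul_card_sq_add_sum_ratioPairs B]

end Energy

section Box

variable {ι R : Type*} [Fintype ι] [CommRing R] (ω : ι → R) (N : ι → ℤ) (H : ι → ℕ)

/-- The box of all `∑ xᵢ ωᵢ` with integral `N i + 1 ≤ xᵢ ≤ N i + H i`. -/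
noncomputable def box : Finset R :=
  (Icc (fun i ↦ N i + 1) fun i ↦ N i + H i).image (intComb ω)

theorem card_box_le : #(box ω N H) ≤ ∏ i, H i := by
  refine card_image_le.trans (le_of_eq ?_)
  simp [Pi.card_Icc]

theorem box_fin_three (ω : Fin 3 → R) (N : Fin 3 → ℤ) (H : Fin 3 → ℕ) :
    box ω N H = (Icc (N 0 + 1) (N 0 + H 0) ×ˢ Icc (N 1 + 1) (N 1 + H 1) ×ˢ
      Icc (N 2 + 1) (N 2 + H 2)).image
        fun x ↦ (x.1 : R) * ω 0 + (x.2.1 : R) * ω 1 + (x.2.2 : R) * ω 2 := by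
  ext y
  simp only [box, mem_image, mem_product, mem_Icc, Pi.le_def, Fintype.linearCombination_apply,
    Fin.sum_univ_three, zsmul_eq_mul]
  constructor
  · rintro ⟨c, ⟨hlow, hupp⟩, rfl⟩
    exact ⟨(c 0, c 1, c 2), ⟨⟨hlow 0, hupp 0⟩, ⟨hlow 1, hupp 1⟩, hlow 2, hupp 2⟩, rfl⟩
  · rintro ⟨⟨c₀, c₁, c₂⟩, ⟨h₀, h₁, h₂⟩, rfl⟩
    refine ⟨![c₀, c₁, c₂], ⟨fun i ↦ ?_, fun i ↦ ?_⟩, rfl⟩ <;> fin_cases i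
    exacts [h₀.1, h₁.1, h₂.1, h₀.2, h₁.2, h₂.2]

theorem card_ratioPairs_box_le {F : Type*} [Field F] (ω : ι → F) (N : ι → ℤ) (H : ι → ℕ) (z : F) :
    #(ratioPairs (box ω N H) z) ≤ #(ratioPoints ω z H) := by
  let I : Finset (ι → ℤ) := Icc (fun i ↦ N i + 1) fun i ↦ N i + H i
  have hsub : ratioPairs (box ω N H) z ⊆
      {q ∈ I ×ˢ I | q ∈ ratioLattice ω z}.image (Prod.map (intComb ω) (intComb ω)) := by
    rintro ⟨_, _⟩ hq
    obtain ⟨⟨⟨hx, hy⟩, hy0⟩, hz⟩ := mem_ratioPairs.1 hq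
    obtain ⟨u, hu, rfl⟩ := mem_image.1 hx
    obtain ⟨v, hv, rfl⟩ := mem_image.1 hy
    exact mem_image.2 ⟨(u, v), mem_filter.2 ⟨mem_product.2 ⟨hu, hv⟩,
      mem_ratioLattice.2 ((div_eq_iff hy0).1 hz)⟩, rfl⟩
  calc #(ratioPairs (box ω N H) z) ≤ #{q ∈ I ×ˢ I | q ∈ ratioLattice ω z} :=
        (card_le_card hsub).trans card_image_le
    _ ≤ #(ratioPoints ω z H) * #(univ : Finset Unit) := by
        refine card_le_card_mul_card_of_sub_mem (f := fun _ ↦ ()) (fun _ _ ↦ mem_univ _)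
          fun q hq q' hq' _ ↦ mem_ratioPoints.2 ⟨fun i ↦ ?_, ?_⟩
        · simp only [mem_filter, mem_product, I, mem_Icc, Pi.le_def] at hq hq'
          simp only [Prod.fst_sub, Prod.snd_sub, Pi.sub_apply, abs_le]
          have h₁ := hq.1.1.1 i
          grind
        · exact sub_mem (mem_filter.1 hq).2 (mem_filter.1 hq').2
    _ = #(ratioPoints ω z H) := by simp

end Box

section Cases

theorem two_mul_lt_of_two_mul_sq_lt {p h n : ℕ} (hn : n ≤ h) (hp : 2 * h ^ 2 < p) : 2 * n < p := by
  have := Nat.le_self_pow two_ne_zero h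
  omega

theorem mul_four_mul_div_add_one_le {m x c : ℝ} (hm : 0 < m) (h : m ≤ c * x) :
    m * (4 * x / m + 1) ≤ (4 + c) * x := by
  calc m * (4 * x / m + 1) = 4 * x + m := by field_simp
    _ ≤ (4 + c) * x := by linarith

theorem mul_four_mul_div_add_one_le_of_le_two_mul {m x y : ℝ} (hm : 0 < m) (hx : 0 ≤ x)
    (hxy : x ≤ y) (h : x ≤ 2 * m) : x * (4 * y / m + 1) ≤ 9 * y := by
  calc x * (4 * y / m + 1) = x / m * (4 * y) + x := by ring
    _ ≤ 2 * (4 * y) + y := by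
      gcongr
      · linarith
      · rwa [div_le_iff₀ hm]
    _ = 9 * y := by ring

variable {p : ℕ} {F : Type*} [Field F] [Algebra (ZMod p) F] {b : Basis (Fin 3) (ZMod p) F}
  {H : Fin 3 → ℕ} {z : F} {S : Finset F}

theorem card_ratioPoints_algebraMap_le_card_single_mul (hH : ∀ i, 2 * H i < p) (a : ZMod p) :
    #(ratioPoints b (algebraMap (ZMod p) F a) H) ≤
      #(ratioPoints b (algebraMap (ZMod p) F a) (Pi.single 2 (H 2))) * (2 * H 1 + 1) *
        (2 * H 0 + 1) := by
  have hupdate : Function.update (Function.update H 0 0) 1 0 = Pi.single 2 (H 2) := by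
    funext i
    fin_cases i <;> simp
  have hH' (i) : 2 * Function.update H 0 0 i < p := by
    have := hH i
    rw [Function.update_apply]
    split_ifs <;> omega
  refine (card_ratioPoints_algebraMap_le_card_update_mul hH 0).trans (Nat.mul_le_mul_right _ ?_)
  rw [← hupdate]
  exact card_ratioPoints_algebraMap_le_card_update_mul hH' 1

theorem sum_card_ratioPoints_sq_le_of_mem_range (hH : 1 ≤ H 0) (hmono : Monotone H)
    (hp : 2 * H 2 ^ 2 < p) (hS : ∀ z ∈ S, 1 < #(ratioPoints b z H))
    (hrange : ∀ z ∈ S, z ∈ (algebraMap (ZMod p) F).range) :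
    ∑ z ∈ S, (#(ratioPoints b z H) : ℝ) ^ 2 ≤
      (Nat.log 2 p + 1 : ℕ) * (108 * (H 0 * H 1 * H 2 : ℝ)) ^ 2 := by
  have hle (i) : H i ≤ H 2 := hmono (Fin.le_last i)
  have hlt (i) : 2 * H i < p := two_mul_lt_of_two_mul_sq_lt (hle i) hp
  have h₀ : (1 : ℝ) ≤ H 0 := mod_cast hH
  have h₁ : (1 : ℝ) ≤ H 1 := mod_cast hH.trans (hmono (Fin.zero_le 1))
  refine sum_sq_le_of_forall_dyadic (b := b) (T := Pi.single 2 (H 2)) (s := 1) (fun i ↦ ?_)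
    one_ne_zero S (fun z hz ↦ ?_) (fun z _ ↦ ?_) (fun _ _ ↦ Nat.cast_nonneg _)
    fun z hz m hm hmT _ hcard ↦ ?_
  · exact two_mul_lt_of_two_mul_sq_lt (by rw [Pi.single_apply]; split_ifs <;> simp) hp
  · obtain ⟨a, rfl⟩ := hrange z hz
    exact one_lt_card_ratioPoints_algebraMap_single hle (hS _ hz)
  · exact finrank_ratioSpan_le_one_of_forall_ne (i := 2) (fun j hj ↦ Pi.single_eq_of_ne hj _)
      (by rwa [Pi.single_eq_same])
  · obtain ⟨a, rfl⟩ := hrange z hz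
    have hm₂ : m ≤ 2 * H 2 := by
      obtain ⟨i, hi⟩ := hmT
      refine hi.trans ?_
      rw [Pi.single_apply]
      split_ifs <;> simp
    have hbound : (#(ratioPoints b (algebraMap (ZMod p) F a) H) : ℝ) ≤
        (2 * m) * (3 * H 1) * (3 * H 0) := by
      calc (#(ratioPoints b (algebraMap (ZMod p) F a) H) : ℝ)
          ≤ #(ratioPoints b (algebraMap (ZMod p) F a) (Pi.single 2 (H 2))) * (2 * H 1 + 1) *
              (2 * H 0 + 1) := mod_cast card_ratioPoints_algebraMap_le_card_single_mul hlt a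
        _ ≤ (2 * m) * (3 * H 1) * (3 * H 0) := by gcongr <;> linarith
    simp only [Fin.prod_univ_three, Pi.single_apply]
    calc _ ≤ (2 * m) * (3 * H 1) * (3 * H 0) * (4 * H 2 / m + 1) := by
          simpa using mul_le_mul_of_nonneg_right hbound (by positivity)
      _ = 18 * (H 0 * H 1) * (m * (4 * H 2 / m + 1)) := by ring
      _ ≤ 18 * (H 0 * H 1) * ((4 + 2) * H 2) := by
          gcongr 18 * (H 0 * H 1) * ?_
          exact mul_four_mul_div_add_one_le (by positivity) hm₂
      _ = 108 * (H 0 * H 1 * H 2) := by ring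

theorem card_ratioPoints_le_card_update_zero_mul (hH : 1 ≤ H 0) :
    (#(ratioPoints b z H) : ℝ) ≤
      #(ratioPoints b z (Function.update H 0 0)) * (64 * (3 * H 0) ^ 2) := by
  have h₀ : (1 : ℝ) ≤ H 0 := mod_cast hH
  calc (#(ratioPoints b z H) : ℝ)
      ≤ #(ratioPoints b z (Function.update H 0 0)) * (4 ^ 3 * (2 * H 0 + 1) ^ 2) :=
        mod_cast card_ratioPoints_le_card_update_mul b z H 0
    _ ≤ #(ratioPoints b z (Function.update H 0 0)) * (64 * (3 * H 0) ^ 2) := by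
        gcongr
        · norm_num
        · linarith

theorem sum_card_ratioPoints_sq_le_of_lt_card_update [Fact p.Prime] (hH : 1 ≤ H 0)
    (hmono : Monotone H) (hp : 2 * H 2 ^ 2 < p)
    (hrange : ∀ z ∈ S, z ∉ (algebraMap (ZMod p) F).range)
    (hS : ∀ z ∈ S, H 0 < #(ratioPoints b z (Function.update H 0 0))) :
    ∑ z ∈ S, (#(ratioPoints b z H) : ℝ) ^ 2 ≤
      (Nat.log 2 p + 1 : ℕ) * (62208 * (H 0 * H 1 * H 2 : ℝ)) ^ 2 := by
  have hF : finrank (ZMod p) F = 3 := by rw [finrank_eq_card_basis b, Fintype.card_fin]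
  have hT (i) : Function.update H 0 0 i ≤ H 2 := by
    rw [Function.update_apply]
    split_ifs
    exacts [zero_le, hmono (Fin.le_last i)]
  have h₀₁ : (H 0 : ℝ) ≤ H 1 := mod_cast hmono (Fin.zero_le 1)
  refine sum_sq_le_of_forall_dyadic (b := b) (T := Function.update H 0 0) (s := 1)
    (fun i ↦ two_mul_lt_of_two_mul_sq_lt (hT i) hp) one_ne_zero S
    (fun z hz ↦ hH.trans_lt (hS z hz)) (fun z hz ↦ ?_) (fun _ _ ↦ Nat.cast_nonneg _)
    fun z hz m hm hmT _ hcard ↦ ?_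
  · refine finrank_ratioSpan_le_one_of_two_lt_natDegree_minpoly (i := 1) (j := 2) (by decide)
      (fun k hk₁ hk₂ ↦ ?_) hT hp (two_lt_natDegree_minpoly_of_notMem_range hF (hrange z hz))
    obtain rfl : k = 0 := by omega
    exact Function.update_self _ _ _
  · obtain ⟨i, hi⟩ := hmT
    have hm₂ : m ≤ 2 * H 2 := hi.trans (mod_cast Nat.mul_le_mul_left 2 (hT i))
    rw [pow_one, pow_one] at hcard
    have h₀ : (H 0 : ℝ) ≤ 2 * m := hcard.trans' (mod_cast (hS z hz).le)
    have hprod : ∏ i, (4 * (Function.update H 0 0 i : ℝ) / m + 1) =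
        (4 * H 1 / m + 1) * (4 * H 2 / m + 1) := by
      simp [Fin.prod_univ_three, Function.update_apply]
    rw [hprod]
    calc #(ratioPoints b z H) * ((4 * H 1 / m + 1) * (4 * H 2 / m + 1))
        ≤ (2 * m) * (64 * (3 * H 0) ^ 2) * ((4 * H 1 / m + 1) * (4 * H 2 / m + 1)) := by
          gcongr
          exact (card_ratioPoints_le_card_update_zero_mul hH).trans (by gcongr)
      _ = 1152 * H 0 * (H 0 * (4 * H 1 / m + 1)) * (m * (4 * H 2 / m + 1)) := by ring
      _ ≤ 1152 * H 0 * (9 * H 1) * ((4 + 2) * H 2) := by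
          gcongr 1152 * H 0 * ?_ * ?_
          · exact mul_four_mul_div_add_one_le_of_le_two_mul (by positivity) (by positivity) h₀₁ h₀
          · exact mul_four_mul_div_add_one_le (by positivity) hm₂
      _ = 62208 * (H 0 * H 1 * H 2) := by ring

theorem sum_card_ratioPoints_sq_le_of_finrank_le_three (hH : 1 ≤ H 0) (hmono : Monotone H)
    (hp : 2 * H 2 ^ 2 < p) (hS : ∀ z ∈ S, 1 < #(ratioPoints b z H))
    (hupdate : ∀ z ∈ S, #(ratioPoints b z (Function.update H 0 0)) ≤ H 0)
    (hrank : ∀ z ∈ S, finrank ℤ (ratioSpan b z H) ≤ 3) :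
    ∑ z ∈ S, (#(ratioPoints b z H) : ℝ) ^ 2 ≤
      (Nat.log 2 p + 1 : ℕ) * (17576 * (H 0 * H 1 * H 2 : ℝ)) ^ 2 := by
  refine sum_sq_le_of_forall_dyadic (b := b) (T := H) (s := 3)
    (fun i ↦ two_mul_lt_of_two_mul_sq_lt (hmono (Fin.le_last i)) hp) three_ne_zero S hS hrank
    (fun _ _ ↦ Nat.cast_nonneg _) fun z hz m hm _ hlow hcard ↦ ?_
  have hm₀ : m ≤ 9 * H 0 := by
    refine (lt_of_pow_lt_pow_left₀ 3 (by positivity) ?_).le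
    calc m ^ 3 < #(ratioPoints b z H) := hlow
      _ ≤ H 0 * (64 * (3 * H 0) ^ 2) := by
          refine (card_ratioPoints_le_card_update_zero_mul hH).trans ?_
          gcongr
          exact_mod_cast hupdate z hz
      _ = 576 * (H 0 : ℝ) ^ 3 := by ring
      _ ≤ 729 * (H 0 : ℝ) ^ 3 := by gcongr; norm_num
      _ = (9 * H 0) ^ 3 := by ring
  have hfactor (i) : m * (4 * H i / m + 1) ≤ (4 + 9) * H i := by
    have : (H 0 : ℝ) ≤ H i := mod_cast hmono (Fin.zero_le i)
    exact mul_four_mul_div_add_one_le (by positivity) (by linarith)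
  rw [Fin.prod_univ_three]
  calc #(ratioPoints b z H) * ((4 * H 0 / m + 1) * (4 * H 1 / m + 1) * (4 * H 2 / m + 1))
      ≤ 2 ^ 3 * m ^ 3 * ((4 * H 0 / m + 1) * (4 * H 1 / m + 1) * (4 * H 2 / m + 1)) := by gcongr
    _ = 8 * ((m * (4 * H 0 / m + 1)) * (m * (4 * H 1 / m + 1)) * (m * (4 * H 2 / m + 1))) := by
        ring
    _ ≤ 8 * (((4 + 9) * H 0) * ((4 + 9) * H 1) * ((4 + 9) * H 2)) := by
        gcongr 8 * (?_ * ?_ * ?_) <;> exact hfactor _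
    _ = 17576 * (H 0 * H 1 * H 2) := by ring

theorem sq_mul_prod_mul_four_mul_div_add_one_le {h T : Fin 3 → ℝ} {m p : ℝ} (hm : 1 ≤ m)
    (hh : ∀ i, 0 ≤ h i) (hT₀ : ∀ i, 0 ≤ T i) (hT : ∀ i, 4 * (h i * T i) ≤ p) (hmp : m ≤ p)
    (h₀ : m * h 0 ≤ p) (hadd : h 1 + h 2 ≤ p) (hmul : h 1 * h 2 ≤ p) :
    m ^ 2 * ∏ i, (h i * (4 * T i / m + 1)) ≤ 6 * p ^ 3 := by
  have hm₀ : 0 < m := by positivity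
  have hp : 0 ≤ p := hm₀.le.trans hmp
  have hh₁ := hh 1
  have hh₂ := hh 2
  have hfactor (i) : h i * (4 * T i / m + 1) ≤ p / m + h i := by
    calc h i * (4 * T i / m + 1) = 4 * (h i * T i) / m + h i := by ring
      _ ≤ p / m + h i := by gcongr; exact hT i
  calc m ^ 2 * ∏ i, (h i * (4 * T i / m + 1))
      ≤ m ^ 2 * ∏ i, (p / m + h i) := by
        gcongr with i
        · exact fun i _ ↦ mul_nonneg (hh i) (by have := hT₀ i; positivity)
        · exact hfactor i
    _ = (p + m * h 0) * (p ^ 2 / m + p * (h 1 + h 2) + m * (h 1 * h 2)) := by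
        rw [Fin.prod_univ_three]
        field_simp
        ring
    _ ≤ (p + p) * (p ^ 2 + p * p + p * p) := by
        gcongr
        exact div_le_self (by positivity) hm
    _ = 6 * p ^ 3 := by ring

theorem card_ratioPoints_le_mul_card_ratioPoints_traceDual_fin_three [Fact p.Prime] [Finite F]
    (hH : ∀ i, 1 ≤ H i) (hp : ∀ i, 2 * H i < p) :
    (#(ratioPoints b z H) : ℝ) ≤ 4 * 36 ^ 6 * ((H 0 * H 1 * H 2 : ℝ) ^ 2 / p ^ 3) *
      #(ratioPoints b.traceDual z (dualSide p H)) := by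
  convert card_ratioPoints_le_mul_card_ratioPoints_traceDual (b := b) (z := z) hH hp using 3
  · norm_num
  · rw [Fin.prod_univ_three, Fintype.card_fin]

theorem sq_mul_prod_mul_four_mul_dualSide_div_add_one_le {m : ℝ} {i : Fin 3} (hH : 1 ≤ H 0)
    (hmono : Monotone H) (hp : 2 * H 2 ^ 2 < p) (hm : 1 ≤ m) (hmi : m ≤ 2 * dualSide p H i) :
    m ^ 2 * ∏ i, (H i * (4 * (dualSide p H i : ℝ) / m + 1)) ≤ 6 * p ^ 3 := by
  have hside (i) : 36 * (H i * dualSide p H i) ≤ p := mul_mul_dualSide_le p H i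
  have hside₀ : 36 * (H 0 * dualSide p H i) ≤ p := (hside i).trans' <| by
    gcongr
    exact hmono (Fin.zero_le i)
  have hm₀ : m * H 0 ≤ p := by
    calc m * H 0 ≤ 2 * dualSide p H i * H 0 := by gcongr
      _ ≤ p := by norm_cast; linarith
  have hH₀ : (1 : ℝ) ≤ H 0 := mod_cast hH
  have h₁₂ : H 1 ≤ H 2 := hmono (Fin.le_last 1)
  have hadd : H 1 + H 2 ≤ p := by nlinarith
  have hmul : H 1 * H 2 ≤ p := by nlinarith
  refine sq_mul_prod_mul_four_mul_div_add_one_le hm (fun _ ↦ Nat.cast_nonneg _)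
    (fun _ ↦ Nat.cast_nonneg _) (fun i ↦ ?_) (by nlinarith) hm₀ (mod_cast hadd) (mod_cast hmul)
  norm_cast
  have := hside i
  omega

theorem sum_card_ratioPoints_sq_le_of_one_lt_card_traceDual [Fact p.Prime] [Finite F]
    (hH : 1 ≤ H 0) (hmono : Monotone H) (hp : 2 * H 2 ^ 2 < p)
    (hrank : ∀ z ∈ S, 3 < finrank ℤ (ratioSpan b z H))
    (hdual : ∀ z ∈ S, 1 < #(ratioPoints b.traceDual z (dualSide p H))) :
    ∑ z ∈ S, (#(ratioPoints b z H) : ℝ) ^ 2 ≤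
      (Nat.log 2 p + 1 : ℕ) * (96 * 36 ^ 6 * (H 0 * H 1 * H 2 : ℝ)) ^ 2 := by
  have hH' (i) : 1 ≤ H i := hH.trans (hmono (Fin.zero_le i))
  have hlt (i) : 2 * H i < p := two_mul_lt_of_two_mul_sq_lt (hmono (Fin.le_last i)) hp
  have hp₀ : 0 < p := NeZero.pos p
  refine sum_sq_le_of_forall_dyadic (b := b.traceDual) (T := dualSide p H) (s := 2)
    (fun i ↦ ?_) two_ne_zero S hdual (fun z hz ↦ ?_) (fun _ _ ↦ Nat.cast_nonneg _)
    fun z _ m hm hmT _ hcard ↦ ?_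
  · have hside : 36 * (H i * dualSide p H i) ≤ p := mul_mul_dualSide_le p H i
    have := Nat.le_mul_of_pos_left (dualSide p H i) (hH' i)
    omega
  · have hsum := finrank_ratioSpan_add_finrank_ratioSpan_traceDual_le (b := b) (z := z) (H := H)
    have := hrank z hz
    rw [Fintype.card_fin] at hsum
    omega
  · obtain ⟨i, hmi⟩ := hmT
    have hcard' : (#(ratioPoints b z H) : ℝ) ≤
        4 * 36 ^ 6 * ((H 0 * H 1 * H 2 : ℝ) ^ 2 / p ^ 3) * (2 ^ 2 * m ^ 2) :=
      (card_ratioPoints_le_mul_card_ratioPoints_traceDual_fin_three hH' hlt).trans (by gcongr)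
    calc #(ratioPoints b z H) * ∏ i, (4 * (dualSide p H i : ℝ) / m + 1)
        ≤ 4 * 36 ^ 6 * ((H 0 * H 1 * H 2 : ℝ) ^ 2 / p ^ 3) * (2 ^ 2 * m ^ 2) *
            ∏ i, (4 * (dualSide p H i : ℝ) / m + 1) := by gcongr
      _ = 16 * 36 ^ 6 * (H 0 * H 1 * H 2) / p ^ 3 *
            (m ^ 2 * ∏ i, (H i * (4 * (dualSide p H i : ℝ) / m + 1))) := by
          rw [prod_mul_distrib, Fin.prod_univ_three fun i ↦ (H i : ℝ)]
          ring
      _ ≤ 16 * 36 ^ 6 * (H 0 * H 1 * H 2) / p ^ 3 * (6 * p ^ 3) := by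
          gcongr 16 * 36 ^ 6 * (H 0 * H 1 * H 2) / p ^ 3 * ?_
          exact sq_mul_prod_mul_four_mul_dualSide_div_add_one_le hH hmono hp hm hmi
      _ = 96 * 36 ^ 6 * (H 0 * H 1 * H 2) := by
          field_simp
          ring

theorem prod_sq_div_pow_three_le_one (hmono : Monotone H) (hp : 2 * H 2 ^ 2 < p) :
    (H 0 * H 1 * H 2 : ℝ) ^ 2 / p ^ 3 ≤ 1 := by
  have hle (i) : H i ≤ H 2 := hmono (Fin.le_last i)
  refine div_le_one_of_le₀ ?_ (by positivity)
  norm_cast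
  calc (H 0 * H 1 * H 2) ^ 2 ≤ (H 2 * H 2 * H 2) ^ 2 := by gcongr <;> exact hle _
    _ = (H 2 ^ 2) ^ 3 := by ring
    _ ≤ p ^ 3 := by gcongr; omega

theorem sum_card_ratioPoints_sq_le_of_card_traceDual_le_one [Fact p.Prime] [Finite F]
    (hH : 1 ≤ H 0) (hmono : Monotone H) (hp : 2 * H 2 ^ 2 < p)
    (hS : ∀ z ∈ S, 1 < #(ratioPoints b z H))
    (hdual : ∀ z ∈ S, #(ratioPoints b.traceDual z (dualSide p H)) ≤ 1) :
    ∑ z ∈ S, (#(ratioPoints b z H) : ℝ) ^ 2 ≤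
      (108 * 36 ^ 6 * (H 0 * H 1 * H 2 : ℝ)) ^ 2 := by
  have hH' (i) : 1 ≤ H i := hH.trans (hmono (Fin.zero_le i))
  have hlt (i) : 2 * H i < p := two_mul_lt_of_two_mul_sq_lt (hmono (Fin.le_last i)) hp
  have hcard {z} (hz : z ∈ S) : (#(ratioPoints b z H) : ℝ) ≤ 4 * 36 ^ 6 := by
    calc (#(ratioPoints b z H) : ℝ) ≤ 4 * 36 ^ 6 * ((H 0 * H 1 * H 2 : ℝ) ^ 2 / p ^ 3) *
          #(ratioPoints b.traceDual z (dualSide p H)) :=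
            card_ratioPoints_le_mul_card_ratioPoints_traceDual_fin_three hH' hlt
      _ ≤ 4 * 36 ^ 6 * 1 * 1 := by
          gcongr
          · exact prod_sq_div_pow_three_le_one hmono hp
          · exact_mod_cast hdual z hz
      _ = 4 * 36 ^ 6 := by norm_num
  have hcardS : (#S : ℝ) ≤ (27 * (H 0 * H 1 * H 2)) ^ 2 := by
    have hS' := card_le_of_forall_exists_mem_ratioPoints_ne_zero (b := b) (T := H)
      (fun i ↦ by have := hlt i; omega) S fun z hz ↦ one_lt_card_ratioPoints.1 (hS z hz)
    norm_cast
    calc #S ≤ (∏ i, (2 * H i + 1)) ^ 2 := hS'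
      _ ≤ (∏ i, 3 * H i) ^ 2 := by gcongr with i; have := hH' i; omega
      _ = (27 * (H 0 * H 1 * H 2)) ^ 2 := by rw [Fin.prod_univ_three]; ring
  calc ∑ z ∈ S, (#(ratioPoints b z H) : ℝ) ^ 2
      ≤ #S • ((4 * 36 ^ 6 : ℝ) ^ 2) := sum_le_card_nsmul S _ _ fun z hz ↦ by
        gcongr
        exact hcard hz
    _ ≤ (27 * (H 0 * H 1 * H 2)) ^ 2 * (4 * 36 ^ 6) ^ 2 := by rw [nsmul_eq_mul]; gcongr
    _ = (108 * 36 ^ 6 * (H 0 * H 1 * H 2)) ^ 2 := by ring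

end Cases

section EnergyBound

theorem sum_le_add_of_sum_filter_le {α : Type*} {S : Finset α} {f : α → ℝ} {x y : ℝ}
    (P : α → Prop) (hP : ∑ a ∈ S with P a, f a ≤ x) (hnP : ∑ a ∈ S with ¬P a, f a ≤ y) :
    ∑ a ∈ S, f a ≤ x + y :=
  (sum_filter_add_sum_filter_not S P f).ge.trans (add_le_add hP hnP)

variable {p : ℕ} [Fact p.Prime] {F : Type*} [Field F] [Algebra (ZMod p) F]
  {b : Basis (Fin 3) (ZMod p) F} {H : Fin 3 → ℕ}

theorem sum_card_ratioPoints_sq_le [Fintype F] (hH : 1 ≤ H 0) (hmono : Monotone H)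
    (hp : 2 * H 2 ^ 2 < p) :
    ∑ z with 1 < #(ratioPoints b z H), (#(ratioPoints b z H) : ℝ) ^ 2 ≤
      5 * ((Nat.log 2 p + 1 : ℕ) * (108 * 36 ^ 6 * (H 0 * H 1 * H 2 : ℝ)) ^ 2) := by
  have hconst {c : ℝ} (hc₀ : 0 ≤ c) (hc : c ≤ 108 * 36 ^ 6) :
      (Nat.log 2 p + 1 : ℕ) * (c * (H 0 * H 1 * H 2 : ℝ)) ^ 2 ≤
        (Nat.log 2 p + 1 : ℕ) * (108 * 36 ^ 6 * (H 0 * H 1 * H 2 : ℝ)) ^ 2 := by gcongr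
  have hlog : (1 : ℝ) ≤ (Nat.log 2 p + 1 : ℕ) := mod_cast Nat.le_add_left 1 _
  set K : ℝ := (Nat.log 2 p + 1 : ℕ) * (108 * 36 ^ 6 * (H 0 * H 1 * H 2 : ℝ)) ^ 2
  suffices hfive : ∑ z with 1 < #(ratioPoints b z H), (#(ratioPoints b z H) : ℝ) ^ 2 ≤
      K + (K + (K + (K + K))) from hfive.trans_eq (by ring)
  refine sum_le_add_of_sum_filter_le (· ∈ (algebraMap (ZMod p) F).range) ?prime <|
    sum_le_add_of_sum_filter_le (fun z ↦ H 0 < #(ratioPoints b z (Function.update H 0 0)))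
      ?update <|
    sum_le_add_of_sum_filter_le (fun z ↦ finrank ℤ (ratioSpan b z H) ≤ 3) ?finrank <|
    sum_le_add_of_sum_filter_le (fun z ↦ 1 < #(ratioPoints b.traceDual z (dualSide p H)))
      ?dual ?trivial
  case prime =>
    refine (sum_card_ratioPoints_sq_le_of_mem_range hH hmono hp ?_ ?_).trans
      (hconst (by norm_num) (by norm_num)) <;> grind
  case update =>
    refine (sum_card_ratioPoints_sq_le_of_lt_card_update hH hmono hp ?_ ?_).trans
      (hconst (by norm_num) (by norm_num)) <;> grind
  case finrank =>
    refine (sum_card_ratioPoints_sq_le_of_finrank_le_three hH hmono hp ?_ ?_ ?_).trans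
      (hconst (by norm_num) (by norm_num)) <;> grind
  case dual =>
    refine (sum_card_ratioPoints_sq_le_of_one_lt_card_traceDual hH hmono hp ?_ ?_).trans
      (hconst (by norm_num) (by norm_num)) <;> grind
  case trivial =>
    refine (sum_card_ratioPoints_sq_le_of_card_traceDual_le_one hH hmono hp ?_ ?_).trans
      (le_mul_of_one_le_left (by positivity) hlog) <;> grind

theorem mulEnergy_box_le (N : Fin 3 → ℤ) (hH : 1 ≤ H 0) (hmono : Monotone H)
    (hp : 2 * H 2 ^ 2 < p) :
    (mulEnergy (box b N H) (box b N H) : ℝ) ≤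
      5 * (1 + (108 * 36 ^ 6) ^ 2) * ((H 0 : ℝ) * H 1 * H 2) ^ 2 * (Nat.log 2 p + 1 : ℕ) := by
  have := Module.Finite.of_basis b
  have := Module.finite_of_finite (ZMod p) (M := F)
  have := Fintype.ofFinite F
  have henergy := mulEnergy_le_five_mul_card_sq_add_sum fun z ↦ card_ratioPairs_box_le b N H z
  have hcard : (#(box b N H) : ℝ) ≤ H 0 * H 1 * H 2 := by
    rw [← Fin.prod_univ_three fun i ↦ (H i : ℝ)]
    exact_mod_cast card_box_le b N H
  have hlog : (1 : ℝ) ≤ (Nat.log 2 p + 1 : ℕ) := mod_cast Nat.le_add_left 1 _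
  calc (mulEnergy (box b N H) (box b N H) : ℝ)
      ≤ 1 * (5 * (#(box b N H) : ℝ) ^ 2) +
          ∑ z with 1 < #(ratioPoints b z H), (#(ratioPoints b z H) : ℝ) ^ 2 := by
        rw [one_mul]
        exact_mod_cast henergy
    _ ≤ (Nat.log 2 p + 1 : ℕ) * (5 * (H 0 * H 1 * H 2 : ℝ) ^ 2) +
          5 * ((Nat.log 2 p + 1 : ℕ) * (108 * 36 ^ 6 * (H 0 * H 1 * H 2 : ℝ)) ^ 2) := by
        gcongr ?_ * (5 * ?_ ^ 2) + ?_
        exact sum_card_ratioPoints_sq_le hH hmono hp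
    _ = 5 * (1 + (108 * 36 ^ 6) ^ 2) * (H 0 * H 1 * H 2 : ℝ) ^ 2 * (Nat.log 2 p + 1 : ℕ) := by
        ring

theorem natLog_two_add_one_le_three_mul_log {n : ℕ} (hn : 2 ≤ n) :
    ((Nat.log 2 n + 1 : ℕ) : ℝ) ≤ 3 * Real.log n := by
  have hlog : Nat.log 2 n * Real.log 2 ≤ Real.log n := by
    rw [← Real.log_pow]
    exact Real.log_le_log (by positivity) (mod_cast Nat.pow_log_le_self 2 (by omega))
  have hlog₁ : (1 : ℝ) ≤ Nat.log 2 n := mod_cast Nat.log_pos one_lt_two hn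
  push_cast
  nlinarith [Real.log_two_gt_d9]

end EnergyBound

theorem exists_algebra_basis_eq {ι : Type*} [Fintype ι] {p : ℕ} [Fact p.Prime] {F : Type*}
    [Field F] [Fintype F] (hF : Fintype.card F = p ^ Fintype.card ι) {ω : ι → F}
    (hω : ∀ c : ι → ℤ, ∑ i, (c i : F) * ω i = 0 → ∀ i, (p : ℤ) ∣ c i) :
    ∃ (_ : Algebra (ZMod p) F) (b : Basis ι (ZMod p) F), ⇑b = ω := by
  have : CharP F p := charP_of_card_eq_prime_pow hF
  let _ := ZMod.algebra F p
  have hfinrank : Fintype.card ι = finrank (ZMod p) F := by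
    have hpow := card_eq_pow_finrank (K := ZMod p) (V := F)
    rw [hF, ZMod.card] at hpow
    exact Nat.pow_right_injective (Fact.out : p.Prime).two_le hpow
  have hli : LinearIndependent (ZMod p) ω := by
    refine Fintype.linearIndependent_iff.2 fun g hg i ↦ ?_
    have hdvd := hω (fun i ↦ (g i).cast) (hg ▸ sum_congr rfl fun i _ ↦ by
      rw [Algebra.smul_def, ← map_intCast (algebraMap (ZMod p) F), ZMod.intCast_zmod_cast]) i
    rwa [← ZMod.intCast_zmod_eq_zero_iff_dvd, ZMod.intCast_zmod_cast] at hdvd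
  have : Nonempty ι := by
    by_contra hι
    rw [not_nonempty_iff] at hι
    rw [Fintype.card_eq_zero (α := ι), pow_zero] at hF
    exact Fintype.one_lt_card.ne' hF
  exact ⟨_, basisOfLinearIndependentOfCardEqFinrank hli hfinrank, by simp⟩

theorem two_mul_sq_lt_of_lt_sqrt {p h : ℕ} (hh : (h : ℝ) < Real.sqrt (p / 2)) :
    2 * h ^ 2 < p := by
  rw [Real.lt_sqrt (Nat.cast_nonneg h), lt_div_iff₀' two_pos] at hh
  exact_mod_cast hh

theorem log_le_log_pow_three {n : ℕ} (hn : 3 ≤ n) : Real.log n ≤ Real.log n ^ 3 := by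
  refine le_self_pow₀ ((Real.le_log_iff_exp_le (by positivity)).2 ?_) three_ne_zero
  exact Real.exp_one_lt_three.le.trans (mod_cast hn)

end BoxEnergy

open BoxEnergy

theorem stmt_4_general {p : ℕ} [Fact p.Prime] {F : Type*} [Field F]
    [Algebra (ZMod p) F] (b : Basis (Fin 3) (ZMod p) F) (N : Fin 3 → ℤ) {H : Fin 3 → ℕ}
    (hH : 1 ≤ H 0) (hmono : Monotone H) (hp : 2 * H 2 ^ 2 < p) :
    (mulEnergy (box b N H) (box b N H) : ℝ) ≤
      (12 * 36 ^ 7) ^ 2 * ((H 0 : ℝ) * H 1 * H 2) ^ 2 * Real.log p := by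
  have hlog := natLog_two_add_one_le_three_mul_log (Fact.out : p.Prime).two_le
  calc (mulEnergy (box b N H) (box b N H) : ℝ)
      ≤ 5 * (1 + (108 * 36 ^ 6) ^ 2) * ((H 0 : ℝ) * H 1 * H 2) ^ 2 * (Nat.log 2 p + 1 : ℕ) :=
        mulEnergy_box_le N hH hmono hp
    _ ≤ 5 * (1 + (108 * 36 ^ 6) ^ 2) * ((H 0 : ℝ) * H 1 * H 2) ^ 2 * (3 * Real.log p) := by gcongr
    _ = 15 * (1 + (108 * 36 ^ 6) ^ 2) * (((H 0 : ℝ) * H 1 * H 2) ^ 2 * Real.log p) := by ring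
    _ ≤ (12 * 36 ^ 7) ^ 2 * (((H 0 : ℝ) * H 1 * H 2) ^ 2 * Real.log p) := by
        have := Real.log_natCast_nonneg p
        gcongr
        norm_num
    _ = (12 * 36 ^ 7) ^ 2 * ((H 0 : ℝ) * H 1 * H 2) ^ 2 * Real.log p := by ring

/-- The Key Lemma for `n = 3`: the multiplicative energy of a box with edges
`H₁ ≤ H₂ ≤ H₃ < √(p/2)` is `O(|B|² (log p)³)`. -/
theorem stmt_4 :
    ∃ C : ℝ, 0 < C ∧
      ∀ (p : ℕ), p.Prime → 3 ≤ p →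
      ∀ (F : Type) [instField : Field F] [instFintype : Fintype F],
        Fintype.card F = p ^ 3 →
        ∀ (ω : Fin 3 → F),
          (∀ c : Fin 3 → ℤ, (∑ i, (c i : F) * ω i) = 0 → ∀ i, (p : ℤ) ∣ c i) →
          (∀ x : F, ∃ c : Fin 3 → ℤ, x = ∑ i, (c i : F) * ω i) →
        ∀ (N : Fin 3 → ℤ) (H : Fin 3 → ℕ),
          (∀ i, 1 ≤ H i) →
          H 0 ≤ H 1 → H 1 ≤ H 2 →
          (H 2 : ℝ) < Real.sqrt ((p : ℝ) / 2) →
          let B : Finset F :=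
            (Finset.Icc (N 0 + 1) (N 0 + (H 0 : ℤ)) ×ˢ
              Finset.Icc (N 1 + 1) (N 1 + (H 1 : ℤ)) ×ˢ
              Finset.Icc (N 2 + 1) (N 2 + (H 2 : ℤ))).image
              (fun x => (x.1 : F) * ω 0 + (x.2.1 : F) * ω 1 + (x.2.2 : F) * ω 2)
          (((B ×ˢ B ×ˢ B ×ˢ B).filter
              (fun q => q.1 * q.2.1 = q.2.2.1 * q.2.2.2)).card : ℝ) ≤
            C * ((H 0 : ℝ) * (H 1 : ℝ) * (H 2 : ℝ)) ^ 2 * Real.log p ^ 3 := by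
  refine ⟨(12 * 36 ^ 7) ^ 2, by norm_num, ?_⟩
  intro p hp hp₃ F _ _ hF ω hω _ N H hH h₀₁ h₁₂ hsqrt B
  have : Fact p.Prime := ⟨hp⟩
  obtain ⟨_, b, rfl⟩ := exists_algebra_basis_eq (by rwa [Fintype.card_fin]) hω
  have hB : B = box b N H := (box_fin_three b N H).symm
  have hmono : Monotone H := Fin.monotone_iff_le_succ.2 (Fin.forall_fin_two.2 ⟨h₀₁, h₁₂⟩)
  rw [hB, ← mulEnergy_self_eq_card_filter]
  refine (stmt_4_general b N (hH 0) hmono (two_mul_sq_lt_of_lt_sqrt hsqrt)).trans ?_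
  gcongr
  exact log_le_log_pow_three hp₃
end

section
/- There is an absolute constant C > 0 such that for every prime p ≥ 3, every basis {ω₁, ω₂} of F_{p²} over F_p, and every box B with 1 ≤ H₁ ≤ H₂ < √(p/2), the multiplicative energy satisfies E(B) ≤ C·|B|²·(log p)³. -/
open scoped Classical

/-!
Up to the solutions of `x * y = w * t` whose common product vanishes, the energy of `B` is
`∑ z, r z ^ 2`, where `r z` counts the pairs in `B` with ratio `z`. Subtracting a fixed such pair
from the others bounds `r z` by the number of points `(u, v)` with `|u i|, |v i| ≤ H i` of the
lattice `Λ z` of index `p ^ 2` cut out by `∑ i, u i • b i = z * ∑ i, v i • b i`. Hence it suffices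
that only `O(|B| ^ 2 / K ^ 2)` elements `z` have at least `K` such points: summation over `K` then
costs a single logarithm.

A short nonzero vector of `Λ z` determines `z`, so it is enough to count short vectors. If the `K`
points span a lattice of rank at most `2`, the pigeonhole principle modulo an integer close to `√K`
yields a vector shorter than the box by this factor. If they span a hyperplane, Cramer's rule yields
a short linear form that vanishes modulo `p` on `Λ z`; by duality for the trace form such forms are
the vectors of the lattice of `-z` for the dual basis. If the rank is `4`, comparing determinants
with the index `p ^ 2 > 4 * |B| ^ 2` bounds `K` by a constant. For `z` in the prime field `Λ z`
splits as a product of two planar lattices, and the same argument is run in a single coordinate.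
-/

/-! ### Lattice points in boxes -/

section LatticePoints

open Finset Module

variable {κ ι V : Type*} [AddCommGroup V]

theorem exists_alternatingMap_ne_zero [Finite κ] {f : V [⋀^κ]→ₗ[ℤ] ℤ} (hf : f ≠ 0) {S : Set V}
    (hS : Submodule.span ℤ S = ⊤) : ∃ a : κ → V, (∀ i, a i ∈ S) ∧ f a ≠ 0 := by
  by_contra! h
  refine hf (AlternatingMap.coe_multilinearMap_injective ?_)
  refine MultilinearMap.ext_of_span_eq_top (g := fun _ => ((↑) : S → V)) (fun _ => ?_) fun j => ?_
  · simpa using hS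
  · exact h _ fun i => (j i).2

variable [Fintype κ] [DecidableEq κ]

theorem index_span_range_eq_abs_det (β : Basis κ ℤ V) {v : κ → V} (hv : β.det v ≠ 0) :
    ((Submodule.span ℤ (Set.range v)).toAddSubgroup.index : ℤ) = |β.det v| := by
  have : Free ℤ V := .of_basis β
  have hindep : LinearIndependent ℤ v := by
    by_contra h
    exact hv (β.det.map_linearDependent v h)
  rw [AddSubgroup.index_eq_natAbs_det β _ (Basis.span hindep), Int.natCast_natAbs]
  congr 2 with j
  exact congrArg Subtype.val (Basis.span_apply hindep j)

theorem index_dvd_det (β : Basis κ ℤ V) (Λ : AddSubgroup V) {v : κ → V} (hv : ∀ j, v j ∈ Λ) :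
    (Λ.index : ℤ) ∣ β.det v := by
  by_cases hdet : β.det v = 0
  · simp [hdet]
  have hle : (Submodule.span ℤ (Set.range v)).toAddSubgroup ≤ Λ :=
    (Submodule.span_le (p := AddSubgroup.toIntSubmodule Λ)).2 (Set.range_subset_iff.2 hv)
  rw [← dvd_abs, ← index_span_range_eq_abs_det β hdet]
  exact_mod_cast AddSubgroup.index_dvd_of_le hle

theorem det_ne_zero_of_linearIndependent (β : Basis κ ℤ V) {v : κ → V}
    (hv : LinearIndependent ℤ v) : β.det v ≠ 0 := by
  intro hdet
  obtain ⟨g, hg, hgv⟩ := Matrix.exists_mulVec_eq_zero_iff.2 (β.det_apply v ▸ hdet)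
  refine hg (funext (Fintype.linearIndependent_iff.1 hv g (β.repr.injective ?_)))
  ext i
  simpa [Matrix.mulVec, dotProduct, Basis.toMatrix_apply, mul_comm, Finsupp.finsetSum_apply]
    using congrFun hgv i

theorem alternatingMap_update_sum_smul (f : V [⋀^κ]→ₗ[ℤ] ℤ) (a : κ → V) (n : κ → ℤ) (i : κ) :
    f (Function.update a i (∑ j, n j • a j)) = n i * f a := by
  rw [f.map_update_sum, sum_eq_single i]
  · rw [f.map_update_smul, Function.update_eq_self, smul_eq_mul]
  · intro j _ hj
    rw [f.map_update_smul, f.map_update_self a hj.symm, smul_zero]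
  · simp

-- If `|det|` is maximal at `a`, a point `x` of `S` is determined by its class modulo the span of
-- `a` together with the floors of its `κ` coordinates with respect to `a`, all in `{-1, 0, 1}`.
theorem card_le_three_pow_mul_abs_det (E : Basis κ ℤ V) {S : Finset V}
    {a : κ → V} (ha : E.det a ≠ 0)
    (hmax : ∀ x ∈ S, ∀ i, |E.det (Function.update a i x)| ≤ |E.det a|) :
    (#S : ℤ) ≤ 3 ^ Fintype.card κ * |E.det a| := by
  let D (i : κ) (x : V) : ℤ := E.det (Function.update a i x)
  let Λ := (Submodule.span ℤ (Set.range a)).toAddSubgroup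
  have hm : 0 < |E.det a| := abs_pos.2 ha
  have hindex : (Λ.index : ℤ) = |E.det a| := index_span_range_eq_abs_det E ha
  have : Λ.FiniteIndex := ⟨by exact_mod_cast hindex ▸ hm.ne'⟩
  have hfloor (x : S) (i : κ) : D i x / |E.det a| ∈ Icc (-1 : ℤ) 1 := by
    obtain ⟨hl, hu⟩ := abs_le.1 (hmax x x.2 i)
    rw [mem_Icc]
    constructor
    · rw [Int.le_ediv_iff_mul_le hm]; linarith
    · exact Int.ediv_le_of_le_mul hm (by linarith)
  have hinj : Function.Injective fun x : S =>
      ((QuotientAddGroup.mk (x : V) : V ⧸ Λ), fun i => (⟨_, hfloor x i⟩ : Icc (-1 : ℤ) 1)) := by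
    intro x y hxy
    obtain ⟨hmod, hfl⟩ := Prod.mk.inj hxy
    obtain ⟨n, hn⟩ := (Submodule.mem_span_range_iff_exists_fun ℤ).1 (QuotientAddGroup.eq.1 hmod)
    have hdiff (i : κ) : D i y - D i x = n i * E.det a := by
      rw [← alternatingMap_update_sum_smul E.det a n i, hn, ← E.det.map_update_sub,
        neg_add_eq_sub]
    have hn0 (i : κ) : n i = 0 := by
      have hdvd : |E.det a| ∣ D i y - D i x := by simp [hdiff]
      have hquot : D i x / |E.det a| = D i y / |E.det a| :=
        congrArg Subtype.val (congrFun hfl i)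
      have hrem : D i x % |E.det a| = D i y % |E.det a| := Int.modEq_iff_dvd.2 hdvd
      have : D i x = D i y := by
        rw [← Int.mul_ediv_add_emod (D i x) |E.det a|, hquot, hrem, Int.mul_ediv_add_emod]
      simpa [this, ha] using hdiff i
    exact Subtype.ext (by simpa [hn0, neg_add_eq_zero, eq_comm] using hn)
  have hcard := Nat.card_le_card_of_injective _ hinj
  rw [Nat.card_prod, Nat.card_fun, Nat.card_eq_finsetCard, Nat.card_eq_finsetCard,
    ← AddSubgroup.index, Nat.card_eq_fintype_card] at hcard
  rw [← hindex, mul_comm]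
  exact_mod_cast hcard

theorem exists_card_le_three_pow_mul_abs_det (E : Basis κ ℤ V) {S : Finset V}
    (hS : Submodule.span ℤ (S : Set V) = ⊤) :
    ∃ a : κ → V, (∀ i, a i ∈ S) ∧ (#S : ℤ) ≤ 3 ^ Fintype.card κ * |E.det a| := by
  have hdet : E.det ≠ 0 := fun h => by simpa [h] using E.det_self
  obtain ⟨a₀, ha₀, hne⟩ := exists_alternatingMap_ne_zero hdet hS
  obtain ⟨a, ha, hmax⟩ := (Fintype.piFinset fun _ : κ => S).exists_max_image
    (fun a => |E.det a|) ⟨a₀, Fintype.mem_piFinset.2 ha₀⟩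
  rw [Fintype.mem_piFinset] at ha
  refine ⟨a, ha, card_le_three_pow_mul_abs_det E ?_ fun x hx i => hmax _ ?_⟩
  · exact abs_pos.1 ((abs_pos.2 hne).trans_le (hmax a₀ (Fintype.mem_piFinset.2 ha₀)))
  · exact Fintype.mem_piFinset.2 fun j => by
      obtain rfl | hj := eq_or_ne j i
      · simpa using hx
      · simpa [hj] using ha j

omit [DecidableEq κ] in
theorem exists_card_mul_abs_alternatingMap_le (S : Finset V)
    (E : Basis κ ℤ (Submodule.span ℤ (S : Set V))) :
    ∃ a : κ → V, (∀ i, a i ∈ S) ∧ ∀ f : V [⋀^κ]→ₗ[ℤ] ℤ,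
      #S * |f fun i => E i| ≤ 3 ^ Fintype.card κ * |f a| := by
  let T := S.preimage ((↑) : Submodule.span ℤ (S : Set V) → V) Subtype.val_injective.injOn
  have hT : Submodule.span ℤ (T : Set (Submodule.span ℤ (S : Set V))) = ⊤ := by
    rw [coe_preimage, Submodule.span_span_coe_preimage]
  have hcard : #T = #S := by
    rw [card_preimage, filter_true_of_mem fun x hx => by
      simpa using Submodule.subset_span hx]
  obtain ⟨a, ha, hle⟩ := exists_card_le_three_pow_mul_abs_det E hT
  refine ⟨fun i => a i, fun i => mem_preimage.1 (ha i), fun f => ?_⟩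
  have hf : f (fun i => a i) = f (fun i => E i) * E.det a :=
    DFunLike.congr_fun
      (AlternatingMap.eq_smul_basis_det E (f.compLinearMap (Submodule.subtype _))) a
  rw [hf, abs_mul, ← hcard]
  calc (#T : ℤ) * |f fun i => E i| ≤ 3 ^ Fintype.card κ * |E.det a| * |f fun i => E i| := by
        gcongr
    _ = _ := by ring

theorem exists_ne_zero_mem_span_mul_abs_le {S : Finset (ι → ℤ)} {h : ι → ℕ}
    (hS : ∀ v ∈ S, ∀ i, |v i| ≤ h i) {k : ℕ} [NeZero k]
    (hk : k ^ finrank ℤ (Submodule.span ℤ (S : Set (ι → ℤ))) < #S) :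
    ∃ u ∈ Submodule.span ℤ (S : Set (ι → ℤ)), u ≠ 0 ∧ ∀ i, k * |u i| ≤ 2 * h i := by
  let L := Submodule.span ℤ (S : Set (ι → ℤ))
  let E := finBasis ℤ L
  let point (x : S) : L := ⟨x, Submodule.subset_span x.2⟩
  obtain ⟨x, y, hxy, hres⟩ := Fintype.exists_ne_map_eq_of_card_lt
    (fun x j => ((E.repr (point x) j : ℤ) : ZMod k)) (by simpa [ZMod.card] using hk)
  have hdvd (j) : (k : ℤ) ∣ E.repr (point x - point y) j := by
    rw [← ZMod.intCast_zmod_eq_zero_iff_dvd]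
    simpa [sub_eq_zero] using congrFun hres j
  choose n hn using hdvd
  let u : L := ∑ j, n j • E j
  have hu : (k : ℤ) • u = point x - point y := by
    rw [← E.sum_repr (point x - point y), smul_sum]
    exact sum_congr rfl fun j _ => by rw [hn, mul_smul]
  refine ⟨u, u.2, fun hu0 => hxy ?_, fun i => ?_⟩
  · rw [Submodule.coe_eq_zero.1 hu0, smul_zero, eq_comm, sub_eq_zero] at hu
    exact Subtype.ext (Subtype.mk.inj hu)
  · have hui : k * (u : ι → ℤ) i = x.1 i - y.1 i := congrFun (congrArg Subtype.val hu) i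
    calc (k : ℤ) * |(u : ι → ℤ) i| = |x.1 i - y.1 i| := by rw [← hui, abs_mul, Nat.abs_cast]
      _ ≤ |x.1 i| + |y.1 i| := abs_sub _ _
      _ ≤ 2 * h i := by linarith [hS x x.2 i, hS y y.2 i]

variable [Fintype ι]

theorem abs_det_le_factorial_mul_prod {e : ι ≃ κ} {h : ι → ℕ} {v : κ → ι → ℤ}
    (hv : ∀ j i, |v j i| ≤ h i) :
    |((Pi.basisFun ℤ ι).reindex e).det v| ≤ (Fintype.card ι).factorial * ∏ i, (h i : ℤ) := by
  rw [Basis.det_reindex, Pi.basisFun_det_apply, ← Matrix.det_transpose, Matrix.det_apply]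
  calc |∑ σ : Equiv.Perm ι, Equiv.Perm.sign σ • ∏ i, v (e i) (σ i)|
      ≤ ∑ σ : Equiv.Perm ι, ∏ i, |v (e i) (σ i)| :=
        (abs_sum_le_sum_abs _ _).trans_eq <| by
          simp [Units.smul_def, abs_mul, abs_prod]
    _ ≤ ∑ σ : Equiv.Perm ι, ∏ i, (h (σ i) : ℤ) := by gcongr; exact hv _ _
    _ = (Fintype.card ι).factorial * ∏ i, (h i : ℤ) := by
        simp [Equiv.prod_comp _ fun i => (h i : ℤ), Fintype.card_perm]

theorem card_mul_index_le_of_finrank_eq_card {S : Finset (ι → ℤ)} {h : ι → ℕ}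
    (hS : ∀ v ∈ S, ∀ i, |v i| ≤ h i)
    {Λ : AddSubgroup (ι → ℤ)} (hSΛ : ∀ v ∈ S, v ∈ Λ)
    (hrank : finrank ℤ (Submodule.span ℤ (S : Set (ι → ℤ))) = Fintype.card ι) :
    #S * (Λ.index : ℤ) ≤
      3 ^ Fintype.card ι * ((Fintype.card ι).factorial * ∏ i, (h i : ℤ)) := by
  let β := (Pi.basisFun ℤ ι).reindex (Fintype.equivFinOfCardEq hrank.symm)
  let E := finBasis ℤ (Submodule.span ℤ (S : Set (ι → ℤ)))
  obtain ⟨a, ha, hle⟩ := exists_card_mul_abs_alternatingMap_le S E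
  have hspan := (Submodule.span_le (p := AddSubgroup.toIntSubmodule Λ)).2 hSΛ
  have hindep : LinearIndependent ℤ fun j => (E j : ι → ℤ) :=
    E.linearIndependent.map' (Submodule.subtype _) (Submodule.ker_subtype _)
  have hne := det_ne_zero_of_linearIndependent β hindep
  have hdvd := index_dvd_det β Λ fun j => hspan (E j).2
  calc #S * (Λ.index : ℤ) ≤ #S * |β.det fun j => (E j : ι → ℤ)| := by
        gcongr
        exact Int.le_of_dvd (abs_pos.2 hne) ((dvd_abs _ _).2 hdvd)
    _ ≤ 3 ^ Fintype.card ι * |β.det a| := by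
        simpa only [Fintype.card_fin, hrank] using hle β.det
    _ ≤ 3 ^ Fintype.card ι * ((Fintype.card ι).factorial * ∏ i, (h i : ℤ)) := by
        gcongr
        exact abs_det_le_factorial_mul_prod fun j => hS _ (ha j)

theorem exists_dual_vector_of_linearIndependent {n : ℕ} (β : Basis (Fin (n + 1)) ℤ (ι → ℤ))
    {Λ : AddSubgroup (ι → ℤ)} {m : ℤ} (hm : m ≠ 0) (hmΛ : ∀ v, m • v ∈ Λ) {e : Fin n → ι → ℤ}
    (he : LinearIndependent ℤ e) (heΛ : ∀ j, e j ∈ Λ) :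
    ∃ c : ι → ℤ, c ≠ 0 ∧ (∀ v ∈ Λ, m ∣ ∑ i, v i * c i) ∧
      ∀ i, Λ.index * c i = m * β.det (Matrix.vecCons (Pi.single i 1) e) := by
  let δ : (ι → ℤ) →ₗ[ℤ] ℤ :=
    { toFun := fun x => β.det.curryLeft x e
      map_add' := fun x y => by simp only [map_add, AlternatingMap.add_apply]
      map_smul' := fun a x => by simp only [map_smul, AlternatingMap.smul_apply, RingHom.id_apply] }
  have hδ_dvd {x} (hx : x ∈ Λ) : (Λ.index : ℤ) ∣ δ x :=
    index_dvd_det β Λ (Fin.cases hx heΛ)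
  have hδ_ne : ∃ x, δ x ≠ 0 := by
    have hlt : n < finrank ℤ (ι → ℤ) := by simp [finrank_eq_card_basis β]
    obtain ⟨x, hx⟩ := exists_linearIndependent_cons_of_lt_finrank he hlt
    exact ⟨x, det_ne_zero_of_linearIndependent β hx⟩
  choose c hc using fun i => hδ_dvd (hmΛ (Pi.single i 1))
  simp only [map_smul, smul_eq_mul] at hc
  have hsum (v : ι → ℤ) : Λ.index * ∑ i, v i * c i = m * δ v := by
    rw [δ.pi_apply_eq_sum_univ v, mul_sum, mul_sum]
    refine sum_congr rfl fun i _ => ?_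
    have hsingle : (fun j => if i = j then (1 : ℤ) else 0) = Pi.single i 1 := by
      ext j
      simp [Pi.single_apply, eq_comm]
    rw [hsingle, smul_eq_mul, mul_left_comm, ← hc i, mul_left_comm]
  obtain ⟨x, hx⟩ := hδ_ne
  have hindex : (Λ.index : ℤ) ≠ 0 := fun h => by simpa [h, hm, hx] using hsum x
  refine ⟨c, ?_, fun v hv => ?_, fun i => (hc i).symm⟩
  · rintro rfl
    simpa [hm, hx] using hsum x
  · obtain ⟨k, hk⟩ := hδ_dvd hv
    refine ⟨k, mul_left_cancel₀ hindex ?_⟩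
    rw [hsum, hk]
    ring

theorem exists_dual_vector_of_finrank_add_one_eq_card {S : Finset (ι → ℤ)} {h : ι → ℕ}
    (hS : ∀ v ∈ S, ∀ i, |v i| ≤ h i) {Λ : AddSubgroup (ι → ℤ)} (hSΛ : ∀ v ∈ S, v ∈ Λ)
    {p : ℕ} [NeZero p] (hp : ∀ v, (p : ℤ) • v ∈ Λ) {n : ℕ} (hn : n + 1 = Fintype.card ι)
    (hrank : finrank ℤ (Submodule.span ℤ (S : Set (ι → ℤ))) = n) :
    ∃ c : ι → ℤ, c ≠ 0 ∧ (∀ v ∈ Λ, (p : ℤ) ∣ ∑ i, v i * c i) ∧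
      ∀ i, #S * Λ.index * (h i * |c i|) ≤
        p * (3 ^ n * ((Fintype.card ι).factorial * ∏ i, (h i : ℤ))) := by
  let β := (Pi.basisFun ℤ ι).reindex (Fintype.equivFinOfCardEq hn.symm)
  let E := finBasisOfFinrankEq ℤ (Submodule.span ℤ (S : Set (ι → ℤ))) hrank
  obtain ⟨a, ha, hle⟩ := exists_card_mul_abs_alternatingMap_le S E
  have hspan := (Submodule.span_le (p := AddSubgroup.toIntSubmodule Λ)).2 hSΛ
  have hindep : LinearIndependent ℤ fun j => (E j : ι → ℤ) :=
    E.linearIndependent.map' (Submodule.subtype _) (Submodule.ker_subtype _)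
  obtain ⟨c, hc, hdvd, hdet⟩ := exists_dual_vector_of_linearIndependent β
    (Nat.cast_ne_zero.2 (NeZero.ne p)) hp hindep fun j => hspan (E j).2
  refine ⟨c, hc, hdvd, fun i => ?_⟩
  calc #S * Λ.index * (h i * |c i|)
      = p * (#S * |β.det.curryLeft ((h i : ℤ) • Pi.single i 1) fun j => E j|) := by
        rw [map_smul, AlternatingMap.smul_apply, smul_eq_mul, abs_mul, Nat.abs_cast]
        have habs : Λ.index * |c i| = p * |β.det.curryLeft (Pi.single i 1) fun j => E j| := by
          simpa only [abs_mul, Nat.abs_cast, AlternatingMap.curryLeft_apply_apply]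
            using congrArg abs (hdet i)
        linear_combination (#S * h i : ℤ) * habs
    _ ≤ p * (3 ^ n * |β.det.curryLeft ((h i : ℤ) • Pi.single i 1) a|) := by
        simpa only [Fintype.card_fin, hrank] using
          mul_le_mul_of_nonneg_left (hle _) (Nat.cast_nonneg p)
    _ ≤ p * (3 ^ n * ((Fintype.card ι).factorial * ∏ i, (h i : ℤ))) := by
        gcongr
        refine abs_det_le_factorial_mul_prod (Fin.cases (fun k => ?_) fun j => hS _ (ha j))
        obtain rfl | hk := eq_or_ne k i <;> simp [*]

end LatticePoints

/-! ### The lattice of representations of a ratio -/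

section RatioLattice

open Finset Module

variable {p : ℕ} {ι F : Type*} [Fintype ι] [Field F]

/-- The lattice of all `v : ι ⊕ ι → ℤ` for which `∑ i, v (inl i) • b i` equals `z` times
`∑ i, v (inr i) • b i`: the representations of `z` as a ratio of two integer combinations of `b`. -/
def ratioLattice (b : ι → F) (z : F) : AddSubgroup (ι ⊕ ι → ℤ) :=
  (Fintype.linearCombination ℤ (Sum.elim b (-(z • b)))).toAddMonoidHom.ker

/-- The points `v` of `ratioLattice b z` in the box `|v (inl i)| ≤ H i`, `|v (inr i)| ≤ H i`. -/
noncomputable def ratioPoints (b : ι → F) (H : ι → ℕ) (z : F) : Finset (ι ⊕ ι → ℤ) :=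
  {v ∈ Fintype.piFinset fun j => Icc (-((Sum.elim H H j : ℕ) : ℤ)) (Sum.elim H H j : ℕ) |
    v ∈ ratioLattice b z}

theorem mem_ratioLattice {b : ι → F} {z : F} {v : ι ⊕ ι → ℤ} :
    v ∈ ratioLattice b z ↔ Fintype.linearCombination ℤ b (v ∘ Sum.inl) =
      z * Fintype.linearCombination ℤ b (v ∘ Sum.inr) := by
  simp [ratioLattice, Fintype.linearCombination_apply, AddMonoidHom.mem_ker, mul_sum,
    mul_left_comm, add_neg_eq_zero]

theorem mem_ratioPoints {b : ι → F} {H : ι → ℕ} {z : F} {v : ι ⊕ ι → ℤ} :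
    v ∈ ratioPoints b H z ↔ (∀ j, |v j| ≤ (Sum.elim H H j : ℕ)) ∧ v ∈ ratioLattice b z := by
  simp only [ratioPoints, mem_filter, Fintype.mem_piFinset, mem_Icc, abs_le]

variable [Algebra (ZMod p) F] (b : Basis ι (ZMod p) F)

theorem linearCombination_int_apply (v : ι → ℤ) :
    Fintype.linearCombination ℤ b v = ∑ i, (v i : ZMod p) • b i := by
  simp [Fintype.linearCombination_apply, Int.cast_smul_eq_zsmul]

theorem repr_linearCombination_int (v : ι → ℤ) (i : ι) :
    b.repr (Fintype.linearCombination ℤ b v) i = v i := by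
  rw [linearCombination_int_apply, b.repr_sum_self]

theorem linearCombination_int_surjective : Function.Surjective (Fintype.linearCombination ℤ b) := by
  intro x
  choose v hv using fun i => ZMod.intCast_surjective (b.repr x i)
  exact ⟨v, by rw [linearCombination_int_apply]; simp [hv, b.sum_repr]⟩

theorem linearCombination_int_eq_zero_iff {v : ι → ℤ} :
    Fintype.linearCombination ℤ b v = 0 ↔ ∀ i, (p : ℤ) ∣ v i := by
  simp only [b.ext_elem_iff, repr_linearCombination_int, map_zero, Finsupp.zero_apply,
    ZMod.intCast_zmod_eq_zero_iff_dvd]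

theorem index_ratioLattice (z : F) : (ratioLattice b z).index = p ^ Fintype.card ι := by
  rw [ratioLattice, AddSubgroup.index_ker, AddMonoidHom.range_eq_top.2, AddSubgroup.card_top]
  · rw [Nat.card_congr b.equivFun.toEquiv, Nat.card_fun, Nat.card_zmod, Nat.card_eq_fintype_card]
  · intro x
    obtain ⟨v, rfl⟩ := linearCombination_int_surjective b x
    exact ⟨Sum.elim v 0, by simp [Fintype.linearCombination_apply]⟩

theorem natCast_smul_mem_ratioLattice (z : F) (v : ι ⊕ ι → ℤ) :
    (p : ℤ) • v ∈ ratioLattice b z := by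
  have hzero (w : ι → ℤ) : Fintype.linearCombination ℤ b ((p : ℤ) • w) = 0 :=
    (linearCombination_int_eq_zero_iff b).2 fun i => dvd_mul_right _ _
  rw [mem_ratioLattice]
  exact (hzero _).trans (by rw [← mul_zero z, ← hzero (v ∘ Sum.inr)]; rfl)

theorem linearCombination_inr_ne_zero {z : F} {u : ι ⊕ ι → ℤ} (hu : u ∈ ratioLattice b z)
    (hu0 : u ≠ 0) (hup : ∀ j, |u j| < p) :
    Fintype.linearCombination ℤ b (u ∘ Sum.inr) ≠ 0 := by
  intro hr
  have hl : Fintype.linearCombination ℤ b (u ∘ Sum.inl) = 0 := by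
    rw [mem_ratioLattice.1 hu, hr, mul_zero]
  rw [linearCombination_int_eq_zero_iff] at hl hr
  exact hu0 <| funext fun j => Int.eq_zero_of_abs_lt_dvd (Sum.rec hl hr j) (hup j)

theorem eq_of_mem_ratioLattice {z w : F} {u : ι ⊕ ι → ℤ} (hu0 : u ≠ 0) (hup : ∀ j, |u j| < p)
    (hz : u ∈ ratioLattice b z) (hw : u ∈ ratioLattice b w) : z = w :=
  mul_right_cancel₀ (linearCombination_inr_ne_zero b hz hu0 hup)
    ((mem_ratioLattice.1 hz).symm.trans (mem_ratioLattice.1 hw))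

theorem card_le_prod_of_mem_ratioLattice {Z : Finset F} {t : ι → ℕ}
    (hZ : ∀ z ∈ Z, ∃ u ∈ ratioLattice b z, u ≠ 0 ∧ ∀ j, |u j| < p ∧ |u j| ≤ (Sum.elim t t j : ℕ)) :
    #Z ≤ ∏ i, (2 * t i + 1) ^ 2 := by
  choose! u hu hu0 hut using hZ
  calc #Z ≤ #(Fintype.piFinset fun j =>
          Icc (-((Sum.elim t t j : ℕ) : ℤ)) (Sum.elim t t j : ℕ)) := by
        refine card_le_card_of_injOn u (fun z hz => ?_) fun z hz w hw hzw => ?_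
        · simp only [mem_coe, Fintype.mem_piFinset, mem_Icc, ← abs_le]
          exact fun j => (hut z hz j).2
        · exact eq_of_mem_ratioLattice b (hu0 z hz) (fun j => (hut z hz j).1) (hu z hz)
            (hzw ▸ hu w hw)
    _ = ∏ i, (2 * t i + 1) ^ 2 := by
        have (n : ℕ) : ((n : ℤ) + 1 + n).toNat = 2 * n + 1 := by omega
        simp [Fintype.card_piFinset, pow_two, prod_mul_distrib, this]

theorem trace_linearCombination_traceDual_mul [DecidableEq ι] [Fact p.Prime]
    [FiniteDimensional (ZMod p) F]
    (c v : ι → ℤ) :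
    Algebra.trace (ZMod p) F (Fintype.linearCombination ℤ b.traceDual c *
      Fintype.linearCombination ℤ b v) = ((∑ i, v i * c i : ℤ) : ZMod p) := by
  simp [linearCombination_int_apply, sum_mul_sum, mul_comm]

theorem swap_mem_ratioLattice_traceDual [DecidableEq ι] [Fact p.Prime]
    [FiniteDimensional (ZMod p) F] {z : F} {c : ι ⊕ ι → ℤ}
    (hc : ∀ v ∈ ratioLattice b z, (p : ℤ) ∣ ∑ j, v j * c j) :
    c ∘ Sum.swap ∈ ratioLattice b.traceDual (-z) := by
  let α := Fintype.linearCombination ℤ b.traceDual (c ∘ Sum.inl)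
  let β := Fintype.linearCombination ℤ b.traceDual (c ∘ Sum.inr)
  suffices h : α * z + β = 0 by
    rw [mem_ratioLattice]
    change β = -z * α
    linear_combination h
  refine (traceForm_nondegenerate (ZMod p) F).1 _ fun y => ?_
  obtain ⟨w, rfl⟩ := linearCombination_int_surjective b y
  obtain ⟨v, hv⟩ := linearCombination_int_surjective b (z * Fintype.linearCombination ℤ b w)
  have hdvd := hc (Sum.elim v w) (mem_ratioLattice.2 hv)
  rw [← ZMod.intCast_zmod_eq_zero_iff_dvd, Fintype.sum_sum_type, Int.cast_add] at hdvd
  rw [Algebra.traceForm_apply, add_mul, mul_assoc, ← hv, map_add]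
  simpa only [α, β, trace_linearCombination_traceDual_mul, Function.comp_apply, Sum.elim_inl,
    Sum.elim_inr] using hdvd

theorem mem_range_algebraMap_of_mem_ratioLattice [Fact p.Prime] {z : F} {u : ι ⊕ ι → ℤ}
    (hu : u ∈ ratioLattice b z) (hu0 : u ≠ 0) (hup : ∀ j, |u j| < p) {i : ι}
    (hi : ∀ j ≠ i, u (.inl j) = 0 ∧ u (.inr j) = 0) : z ∈ Set.range (algebraMap (ZMod p) F) := by
  have hsingle {v : ι → ℤ} (hv : ∀ j ≠ i, v j = 0) :
      Fintype.linearCombination ℤ b v = algebraMap (ZMod p) F (v i) * b i := by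
    rw [linearCombination_int_apply, Fintype.sum_eq_single i (fun j hj => by simp [hv j hj]),
      Algebra.smul_def]
  have hl := hsingle (v := u ∘ Sum.inl) fun j hj => (hi j hj).1
  have hr := hsingle (v := u ∘ Sum.inr) fun j hj => (hi j hj).2
  have hz := mem_ratioLattice.1 hu
  rw [hl, hr, ← mul_assoc] at hz
  replace hz := mul_right_cancel₀ (b.ne_zero i) hz
  have hne : algebraMap (ZMod p) F (u (.inr i)) ≠ 0 := fun h =>
    linearCombination_inr_ne_zero b hu hu0 hup (by rw [hr, Function.comp_apply, h, zero_mul])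
  exact ⟨u (.inl i) / u (.inr i), by rw [map_div₀, div_eq_iff hne]; exact hz⟩

end RatioLattice

/-! ### Ratios with many representations -/

section RichRatios

open Finset Module

variable {p : ℕ} {ι F : Type*} [Fintype ι] [Field F] [Algebra (ZMod p) F]

theorem exists_mem_ratioLattice_mul_abs_le (b : ι → F) {H : ι → ℕ} {z : F} {k : ℕ} [NeZero k]
    (hk : k ^ finrank ℤ (Submodule.span ℤ (ratioPoints b H z : Set (ι ⊕ ι → ℤ))) <
      #(ratioPoints b H z)) :
    ∃ u ∈ ratioLattice b z, u ≠ 0 ∧ ∀ j, k * |u j| ≤ 2 * (Sum.elim H H j : ℕ) := by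
  obtain ⟨u, hu, hu0, hle⟩ :=
    exists_ne_zero_mem_span_mul_abs_le (fun v hv => (mem_ratioPoints.1 hv).1) hk
  exact ⟨u, (Submodule.span_le (p := AddSubgroup.toIntSubmodule (ratioLattice b z))).2
    (fun v hv => (mem_ratioPoints.1 hv).2) hu, hu0, hle⟩

theorem card_ratioPoints_mul_pow_le (b : Basis ι (ZMod p) F) {H : ι → ℕ} {z : F}
    (hrank : finrank ℤ (Submodule.span ℤ (ratioPoints b H z : Set (ι ⊕ ι → ℤ))) =
      Fintype.card (ι ⊕ ι)) :
    #(ratioPoints b H z) * p ^ Fintype.card ι ≤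
      3 ^ Fintype.card (ι ⊕ ι) * ((Fintype.card (ι ⊕ ι)).factorial * (∏ i, H i) ^ 2) := by
  have h := card_mul_index_le_of_finrank_eq_card (fun v hv => (mem_ratioPoints.1 hv).1)
    (fun v hv => (mem_ratioPoints.1 hv).2) hrank
  rw [index_ratioLattice, Fintype.prod_sum_type] at h
  simp only [Sum.elim_inl, Sum.elim_inr, ← pow_two] at h
  exact_mod_cast h

theorem exists_mem_ratioLattice_card_mul_abs_le (b : Basis Unit (ZMod p) F) {h : ℕ}
    (hh : 2 * h ^ 2 < p) {z : F} (hcard : 2 ≤ #(ratioPoints b (fun _ => h) z)) :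
    ∃ u ∈ ratioLattice b z, u ≠ 0 ∧
      ∀ j, |u j| ≤ h ∧ #(ratioPoints b (fun _ => h) z) * |u j| ≤ 8 * h := by
  set n := #(ratioPoints b (fun _ => h) z) with hn
  obtain hn8 | hn8 := le_or_gt n 8
  · obtain ⟨u, hu, hu0⟩ := exists_mem_ne hcard 0
    obtain ⟨hle, hu⟩ := mem_ratioPoints.1 hu
    refine ⟨u, hu, hu0, fun j => ?_⟩
    have huj : |u j| ≤ h := by cases j <;> exact hle _
    refine ⟨huj, ?_⟩
    gcongr
    exact_mod_cast hn8
  · have hrank : finrank ℤ (Submodule.span ℤ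
        (ratioPoints b (fun _ => h) z : Set (Unit ⊕ Unit → ℤ))) ≤ 1 := by
      have hle := Submodule.finrank_le (Submodule.span ℤ
        (ratioPoints b (fun _ => h) z : Set (Unit ⊕ Unit → ℤ)))
      rw [finrank_pi] at hle
      refine Nat.le_of_lt_succ (lt_of_le_of_ne hle fun hr => ?_)
      have hnp : n * p ≤ 3 ^ 2 * (2 * h ^ 2) := by
        simpa [Nat.factorial, ← hn] using card_ratioPoints_mul_pow_le b hr
      nlinarith
    have : NeZero (n - 1) := ⟨by omega⟩
    obtain ⟨u, hu, hu0, hle⟩ := exists_mem_ratioLattice_mul_abs_le b (k := n - 1)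
      (((Nat.pow_le_pow_right (by omega) hrank).trans_eq (pow_one _)).trans_lt
        (show n - 1 < n by omega))
    refine ⟨u, hu, hu0, fun j => ?_⟩
    have huj : ((n - 1 : ℕ) : ℤ) * |u j| ≤ 2 * h := by cases j <;> exact hle _
    rw [Nat.cast_sub (by omega)] at huj
    have : (9 : ℤ) ≤ n := by exact_mod_cast hn8
    have := abs_nonneg (u j)
    push_cast at huj
    constructor <;> nlinarith

theorem card_ratioPoints_le_prod [Fact p.Prime] (b : Basis ι (ZMod p) F) (H : ι → ℕ) (z : ZMod p) :
    #(ratioPoints b H (algebraMap (ZMod p) F z)) ≤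
      ∏ i, #(ratioPoints (Basis.singleton Unit (ZMod p)) (fun _ => H i) z) := by
  rw [← Fintype.card_piFinset]
  refine card_le_card_of_injOn
    (fun v i => Sum.elim (fun _ => v (.inl i)) (fun _ => v (.inr i))) (fun v hv => ?_)
    fun v _ w _ hvw => ?_
  · obtain ⟨hle, hmem⟩ := mem_ratioPoints.1 hv
    refine Fintype.mem_piFinset.2 fun i => mem_ratioPoints.2 ⟨?_, mem_ratioLattice.2 ?_⟩
    · exact Sum.rec (fun _ => hle (.inl i)) fun _ => hle (.inr i)
    · have hcoord := DFunLike.congr_fun (congrArg b.repr (mem_ratioLattice.1 hmem)) i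
      rw [← Algebra.smul_def, map_smul, Finsupp.smul_apply, repr_linearCombination_int,
        repr_linearCombination_int] at hcoord
      simpa [Fintype.linearCombination_apply] using hcoord
  · funext j
    cases j with
    | inl i => exact congrFun (congrFun hvw i) (.inl ())
    | inr i => exact congrFun (congrFun hvw i) (.inr ())

theorem card_ratioPoints_le_eight_mul (b : Basis Unit (ZMod p) F) {h : ℕ}
    (hh1 : 1 ≤ h) (hh : 2 * h ^ 2 < p) (z : F) : #(ratioPoints b (fun _ => h) z) ≤ 8 * h := by
  by_contra! hlt
  obtain ⟨u, -, hu0, hu⟩ := exists_mem_ratioLattice_card_mul_abs_le b hh (z := z) (by omega)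
  refine hu0 (funext fun j => ?_)
  by_contra hj
  have := (hu j).2
  have := Int.one_le_abs hj
  have : (8 * h + 1 : ℤ) ≤ #(ratioPoints b (fun _ => h) z) := by exact_mod_cast hlt
  nlinarith

theorem exists_mem_ratioLattice_singleton [Fact p.Prime] (b : Basis (Fin 2) (ZMod p) F)
    {H : Fin 2 → ℕ} (hH1 : ∀ i, 1 ≤ H i) (hH : ∀ i, 2 * H i ^ 2 < p) {z : ZMod p}
    (hcard : 2 ≤ #(ratioPoints b H (algebraMap (ZMod p) F z))) :
    ∃ u ∈ ratioLattice (Basis.singleton Unit (ZMod p)) z, u ≠ 0 ∧ ∀ j, |u j| < p ∧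
      #(ratioPoints b H (algebraMap (ZMod p) F z)) * |u j| ≤ 64 * ∏ i, (H i : ℤ) := by
  let n (i : Fin 2) := #(ratioPoints (Basis.singleton Unit (ZMod p)) (fun _ => H i) z)
  have hle : _ ≤ ∏ i, n i := card_ratioPoints_le_prod b H z
  obtain ⟨i, hi⟩ : ∃ i, 2 ≤ n i := by
    by_contra! hn
    have : ∏ i, n i ≤ 1 := prod_le_one' fun i _ => Nat.le_of_lt_succ (hn i)
    omega
  obtain ⟨u, hu, hu0, hule⟩ := exists_mem_ratioLattice_card_mul_abs_le _ (hH i) hi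
  refine ⟨u, hu, hu0, fun j => ⟨?_, ?_⟩⟩
  · have := (hule j).1
    have := hH i
    have := hH1 i
    zify at *
    nlinarith
  · have hrev : n i.rev ≤ 8 * H i.rev := card_ratioPoints_le_eight_mul _ (hH1 _) (hH _) z
    have hprod {R : Type} [CommMonoid R] (f : Fin 2 → R) : ∏ k, f k = f i * f i.rev := by
      fin_cases i <;> simp [Fin.prod_univ_two, mul_comm]
    calc (#(ratioPoints b H (algebraMap (ZMod p) F z)) : ℤ) * |u j|
        ≤ (n i * n i.rev : ℕ) * |u j| := by
          gcongr
          rwa [← hprod n]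
      _ = (n i * |u j|) * n i.rev := by push_cast; ring
      _ ≤ (8 * H i) * (8 * H i.rev : ℕ) :=
          mul_le_mul (hule j).2 (by exact_mod_cast hrev) (by positivity) (by positivity)
      _ = 64 * ∏ i, (H i : ℤ) := by rw [hprod]; push_cast; ring

theorem card_mul_sq_le_of_mem_ratioLattice (b : Basis Unit (ZMod p) F) {K A : ℕ} (hK : 0 < K)
    {Z : Finset F} (hZ : ∀ z ∈ Z, ∃ u ∈ ratioLattice b z, u ≠ 0 ∧ ∀ j, |u j| < p ∧ K * |u j| ≤ A) :
    #Z * K ^ 2 ≤ (3 * A) ^ 2 := by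
  obtain rfl | ⟨z, hz⟩ := Z.eq_empty_or_nonempty
  · simp
  have hKA : K ≤ A := by
    obtain ⟨u, -, hu0, hu⟩ := hZ z hz
    obtain ⟨j, hj⟩ := Function.ne_iff.1 hu0
    have := (hu j).2
    have := Int.one_le_abs hj
    zify at *
    nlinarith
  have hZt : #Z ≤ (2 * (A / K) + 1) ^ 2 := by
    refine (card_le_prod_of_mem_ratioLattice b (t := fun _ => A / K) fun z hz => ?_).trans_eq
      (by simp)
    obtain ⟨u, hu, hu0, hule⟩ := hZ z hz
    have hle (j) : |u j| ≤ (A / K : ℕ) := by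
      rw [Int.natCast_div, Int.le_ediv_iff_mul_le (by exact_mod_cast hK), mul_comm]
      exact (hule j).2
    exact ⟨u, hu, hu0, fun j => ⟨(hule j).1, by cases j <;> exact hle _⟩⟩
  calc #Z * K ^ 2 ≤ (2 * (A / K) + 1) ^ 2 * K ^ 2 := by gcongr
    _ = (2 * (A / K * K) + K) ^ 2 := by ring
    _ ≤ (2 * A + A) ^ 2 := by gcongr; exact Nat.div_mul_le_self A K
    _ = (3 * A) ^ 2 := by ring

theorem card_mul_sq_le_of_mem_range [Fact p.Prime] (b : Basis (Fin 2) (ZMod p) F)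
    {H : Fin 2 → ℕ} (hH1 : ∀ i, 1 ≤ H i) (hH : ∀ i, 2 * H i ^ 2 < p) {K : ℕ} (hK : 2 ≤ K)
    {Z : Finset F}
    (hZ : ∀ z ∈ Z, z ∈ Set.range (algebraMap (ZMod p) F) ∧ K ≤ #(ratioPoints b H z)) :
    #Z * K ^ 2 ≤ 192 ^ 2 * (∏ i, H i) ^ 2 := by
  have hinj := (algebraMap (ZMod p) F).injective
  have hcard : #(Z.preimage _ hinj.injOn) = #Z := by
    rw [card_preimage, filter_true_of_mem fun z hz => (hZ z hz).1]
  have hle := card_mul_sq_le_of_mem_ratioLattice (Basis.singleton Unit (ZMod p))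
    (Z := Z.preimage _ hinj.injOn) (A := 64 * ∏ i, H i) (by omega : 0 < K) fun z hz => by
      have hKz := (hZ _ (mem_preimage.1 hz)).2
      obtain ⟨u, hu, hu0, hule⟩ := exists_mem_ratioLattice_singleton b hH1 hH (hK.trans hKz)
      refine ⟨u, hu, hu0, fun j => ⟨(hule j).1, le_trans ?_ ((hule j).2.trans_eq (by simp))⟩⟩
      gcongr
  rw [← hcard, ← mul_pow]
  exact hle.trans_eq (by ring)

theorem card_le_mul_prod_sq_of_notMem_range [Fact p.Prime] (b : Basis (Fin 2) (ZMod p) F)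
    {Z : Finset F} {t : Fin 2 → ℕ}
    (hZ : ∀ z ∈ Z, z ∉ Set.range (algebraMap (ZMod p) F) ∧ ∃ u ∈ ratioLattice b z, u ≠ 0 ∧
      ∀ j, |u j| < p ∧ |u j| ≤ (Sum.elim t t j : ℕ)) :
    #Z ≤ 81 * (∏ i, t i) ^ 2 := by
  obtain rfl | ⟨z, hz⟩ := Z.eq_empty_or_nonempty
  · simp
  have ht (i : Fin 2) : 1 ≤ t i := by
    obtain ⟨hrange, u, hu, hu0, hut⟩ := hZ z hz
    refine Nat.one_le_iff_ne_zero.2 fun hti => hrange ?_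
    refine mem_range_algebraMap_of_mem_ratioLattice b hu hu0 (fun j => (hut j).1) (i := i.rev)
      fun j hj => ?_
    obtain rfl : j = i := by fin_cases i <;> fin_cases j <;> simp_all
    exact ⟨by simpa [hti] using (hut (.inl j)).2, by simpa [hti] using (hut (.inr j)).2⟩
  calc #Z ≤ ∏ i, (2 * t i + 1) ^ 2 :=
        card_le_prod_of_mem_ratioLattice b fun z hz => (hZ z hz).2
    _ ≤ ∏ i, (3 * t i) ^ 2 := by gcongr with i; have := ht i; omega
    _ = 81 * (∏ i, t i) ^ 2 := by simp only [Fin.prod_univ_two]; ring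

-- Here `486 = 3 ^ 4 * 4! / 2 ^ 2` and `324 = 3 ^ 3 * 4! / 2`; the denominators come from `hA`.
theorem exists_mem_ratioLattice_or_traceDual [Fact p.Prime] [FiniteDimensional (ZMod p) F]
    (b : Basis (Fin 2) (ZMod p) F) {H : Fin 2 → ℕ} (hA : 2 * ∏ i, H i < p) {z : F}
    {k : ℕ} [NeZero k] (hN : 486 ≤ #(ratioPoints b H z))
    (hk : k ^ 2 < #(ratioPoints b H z)) :
    (∃ u ∈ ratioLattice b z, u ≠ 0 ∧ ∀ j, k * |u j| ≤ 2 * (Sum.elim H H j : ℕ)) ∨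
    ∃ c ∈ ratioLattice b.traceDual (-z), c ≠ 0 ∧
      ∀ j, #(ratioPoints b H z) * ((Sum.elim H H j : ℕ) * |c j|) ≤ 324 * ∏ i, (H i : ℤ) := by
  let r := finrank ℤ (Submodule.span ℤ (ratioPoints b H z : Set (Fin 2 ⊕ Fin 2 → ℤ)))
  have hr : r ≤ 4 := (Submodule.finrank_le _).trans_eq (by simp)
  have hp : 0 < p := (Fact.out : p.Prime).pos
  obtain hr2 | hr3 | hr4 : r ≤ 2 ∨ r = 3 ∨ r = 4 := by omega
  · exact .inl (exists_mem_ratioLattice_mul_abs_le b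
      ((Nat.pow_le_pow_right (NeZero.pos k) hr2).trans_lt hk))
  · right
    obtain ⟨c, hc0, hc, hle⟩ := exists_dual_vector_of_finrank_add_one_eq_card
      (fun v hv => (mem_ratioPoints.1 hv).1) (fun v hv => (mem_ratioPoints.1 hv).2)
      (natCast_smul_mem_ratioLattice b z)
      (n := 3) (by simp) hr3
    refine ⟨c ∘ Sum.swap, swap_mem_ratioLattice_traceDual b hc, fun h => hc0 ?_, fun j => ?_⟩
    · funext j
      simpa using congrFun h j.swap
    · have hj := hle j.swap
      have hswap : ((Sum.elim H H j.swap : ℕ) : ℤ) * |c j.swap| =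
          (Sum.elim H H j : ℕ) * |(c ∘ Sum.swap) j| := by cases j <;> rfl
      rw [index_ratioLattice, Fintype.prod_sum_type, hswap] at hj
      zify at hA hp
      refine le_of_mul_le_mul_left ?_ (pow_pos hp 2)
      calc (p : ℤ) ^ 2 * (#(ratioPoints b H z) * ((Sum.elim H H j : ℕ) * |(c ∘ Sum.swap) j|))
          = #(ratioPoints b H z) * p ^ 2 * ((Sum.elim H H j : ℕ) * |(c ∘ Sum.swap) j|) := by ring
        _ ≤ p * (3 ^ 3 * (24 * ((∏ i, (H i : ℤ)) * ∏ i, (H i : ℤ)))) := hj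
        _ = 324 * p * (∏ i, (H i : ℤ)) * (2 * ∏ i, (H i : ℤ)) := by ring
        _ ≤ 324 * p * (∏ i, (H i : ℤ)) * p := by gcongr
        _ = p ^ 2 * (324 * ∏ i, (H i : ℤ)) := by ring
  · have hle : #(ratioPoints b H z) * p ^ 2 ≤ 3 ^ 4 * (24 * (∏ i, H i) ^ 2) :=
      card_ratioPoints_mul_pow_le b hr4
    nlinarith [Nat.pow_lt_pow_left hA two_ne_zero, Nat.mul_le_mul_right (p ^ 2) hN]

theorem card_mul_pow_four_le [Fact p.Prime] (b : Basis (Fin 2) (ZMod p) F) {H : Fin 2 → ℕ}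
    (hH : ∀ i, 2 * H i < p) {k : ℕ} [NeZero k] {Z : Finset F}
    (hZ : ∀ z ∈ Z, z ∉ Set.range (algebraMap (ZMod p) F) ∧ ∃ u ∈ ratioLattice b z, u ≠ 0 ∧
      ∀ j, k * |u j| ≤ 2 * (Sum.elim H H j : ℕ)) :
    #Z * k ^ 4 ≤ 1296 * (∏ i, H i) ^ 2 := by
  have hZt : #Z ≤ 81 * (∏ i, 2 * H i / k) ^ 2 := by
    refine card_le_mul_prod_sq_of_notMem_range b fun z hz => ?_
    obtain ⟨hrange, u, hu, hu0, hule⟩ := hZ z hz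
    have hdiv (i : Fin 2) {x : ℤ} (hx : k * x ≤ 2 * (H i : ℕ)) : x < p ∧ x ≤ (2 * H i / k : ℕ) := by
      have hle : x ≤ (2 * H i / k : ℕ) := by
        rw [Int.natCast_div, Int.le_ediv_iff_mul_le (by exact_mod_cast NeZero.pos k), mul_comm]
        exact_mod_cast hx
      exact ⟨hle.trans_lt (by exact_mod_cast (Nat.div_le_self _ k).trans_lt (hH i)), hle⟩
    exact ⟨hrange, u, hu, hu0, Sum.rec (fun i => hdiv i (hule (.inl i)))
      fun i => hdiv i (hule (.inr i))⟩
  calc #Z * k ^ 4 ≤ 81 * (∏ i, 2 * H i / k) ^ 2 * k ^ 4 := by gcongr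
    _ = 81 * (∏ i, 2 * H i / k * k) ^ 2 := by simp only [Fin.prod_univ_two]; ring
    _ ≤ 81 * (∏ i, 2 * H i) ^ 2 := by
        gcongr 81 * ?_ ^ 2
        exact prod_le_prod' fun i _ => Nat.div_mul_le_self _ _
    _ = 1296 * (∏ i, H i) ^ 2 := by simp only [Fin.prod_univ_two]; ring

theorem card_mul_sq_le_of_exists_traceDual [Fact p.Prime] [FiniteDimensional (ZMod p) F]
    (b : Basis (Fin 2) (ZMod p) F) {H : Fin 2 → ℕ} (hH : ∀ i, 1 ≤ H i)
    (hA : 2 * ∏ i, H i < p) {K : ℕ} (hK : 486 ≤ K) {Z : Finset F}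
    (hZ : ∀ z ∈ Z, z ∉ Set.range (algebraMap (ZMod p) F) ∧
      ∃ c ∈ ratioLattice b.traceDual (-z), c ≠ 0 ∧
        ∀ j, K * ((Sum.elim H H j : ℕ) * |c j|) ≤ 324 * ∏ i, (H i : ℤ)) :
    #Z * K ^ 2 ≤ 81 * 216 ^ 2 * (∏ i, H i) ^ 2 := by
  let t (i : Fin 2) := 324 * (∏ i, H i) / (K * H i)
  have hZt : #(Z.map (Equiv.neg F).toEmbedding) ≤ 81 * (∏ i, t i) ^ 2 := by
    refine card_le_mul_prod_sq_of_notMem_range b.traceDual fun w hw => ?_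
    obtain ⟨z, hz, rfl⟩ := mem_map.1 hw
    obtain ⟨hrange, c, hc, hc0, hcle⟩ := hZ z hz
    have hdiv (i : Fin 2) {x : ℤ} (hx : K * (H i * x) ≤ 324 * ∏ i, (H i : ℤ)) :
        x < p ∧ x ≤ t i := by
      have hHi := hH i
      zify at hA hK hHi
      constructor
      · by_contra! hpx
        have : (486 : ℤ) * (1 * p) ≤ K * (H i * x) := by gcongr
        linarith
      · have hKH : 0 < K * H i := Nat.mul_pos (by omega) (hH i)
        rw [Int.natCast_div, Int.le_ediv_iff_mul_le (Int.natCast_pos.2 hKH)]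
        push_cast
        linarith
    refine ⟨fun ⟨a, ha⟩ => hrange ⟨-a, by simp [ha]⟩, c, hc, hc0, ?_⟩
    exact Sum.rec (fun i => hdiv i (hcle (.inl i))) fun i => hdiv i (hcle (.inr i))
  rw [card_map] at hZt
  have hpos : 0 < ∏ i, H i := prod_pos fun i _ => hH i
  have ht : K * ∏ i, t i ≤ 216 * ∏ i, H i := by
    have hmul : ∏ i, t i * (K * H i) ≤ ∏ _i : Fin 2, 324 * ∏ i, H i :=
      prod_le_prod' fun i _ => Nat.div_mul_le_self _ _
    refine le_of_mul_le_mul_left (a := 486 * ∏ i, H i) ?_ (by positivity)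
    calc (486 * ∏ i, H i) * (K * ∏ i, t i) ≤ (K * ∏ i, H i) * (K * ∏ i, t i) := by gcongr
      _ = ∏ i, t i * (K * H i) := by simp only [Fin.prod_univ_two]; ring
      _ ≤ _ := hmul
      _ = (486 * ∏ i, H i) * (216 * ∏ i, H i) := by simp only [Fin.prod_univ_two]; ring
  calc #Z * K ^ 2 ≤ 81 * (∏ i, t i) ^ 2 * K ^ 2 := by gcongr
    _ = 81 * (K * ∏ i, t i) ^ 2 := by ring
    _ ≤ 81 * (216 * ∏ i, H i) ^ 2 := by gcongr
    _ = 81 * 216 ^ 2 * (∏ i, H i) ^ 2 := by ring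

theorem card_mul_sq_le_of_notMem_range [Fact p.Prime] (b : Basis (Fin 2) (ZMod p) F)
    {H : Fin 2 → ℕ} (hH1 : ∀ i, 1 ≤ H i)
    (hH : ∀ i, 2 * H i < p) (hA : 2 * ∏ i, H i < p) {K : ℕ} (hK : 2 ≤ K) {Z : Finset F}
    (hZ : ∀ z ∈ Z, z ∉ Set.range (algebraMap (ZMod p) F) ∧ K ≤ #(ratioPoints b H z)) :
    #Z * K ^ 2 ≤ 1296 * 486 ^ 2 * (∏ i, H i) ^ 2 := by
  have : FiniteDimensional (ZMod p) F := .of_basis b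
  obtain hK' | hK' := lt_or_ge K 486
  · have := card_mul_pow_four_le (k := 1) b hH (Z := Z) fun z hz => by
      obtain ⟨u, hu, hu0⟩ := exists_mem_ne (hK.trans (hZ z hz).2) 0
      obtain ⟨hle, hu⟩ := mem_ratioPoints.1 hu
      exact ⟨(hZ z hz).1, u, hu, hu0, fun j => by have := hle j; push_cast; linarith⟩
    calc #Z * K ^ 2 ≤ #Z * 1 ^ 4 * 486 ^ 2 := by rw [one_pow, mul_one]; gcongr
      _ ≤ 1296 * (∏ i, H i) ^ 2 * 486 ^ 2 := by gcongr
      _ ≤ 1296 * 486 ^ 2 * (∏ i, H i) ^ 2 := by linarith [Nat.zero_le ((∏ i, H i) ^ 2)]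
  let k := Nat.sqrt (K - 1)
  have hk : 0 < k := Nat.sqrt_pos.2 (by omega)
  have : NeZero k := ⟨hk.ne'⟩
  have hkK : k ^ 2 < K := (Nat.sqrt_le' _).trans_lt (by omega)
  have hKk : K ≤ 4 * k ^ 2 := by
    have : K - 1 < (k + 1) ^ 2 := Nat.lt_succ_sqrt' _
    nlinarith [Nat.sub_add_cancel (show 1 ≤ K by omega)]
  let IsShort (z : F) := ∃ u ∈ ratioLattice b z, u ≠ 0 ∧ ∀ j, k * |u j| ≤ 2 * (Sum.elim H H j : ℕ)
  have hshort : #(Z.filter IsShort) * k ^ 4 ≤ 1296 * (∏ i, H i) ^ 2 :=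
    card_mul_pow_four_le b hH fun z hz =>
      ⟨(hZ z (mem_filter.1 hz).1).1, (mem_filter.1 hz).2⟩
  have hdual : #(Z.filter (¬ IsShort ·)) * K ^ 2 ≤ 81 * 216 ^ 2 * (∏ i, H i) ^ 2 := by
    refine card_mul_sq_le_of_exists_traceDual b hH1 hA hK' fun z hz => ?_
    obtain ⟨hz, hns⟩ := mem_filter.1 hz
    obtain ⟨hrange, hKz⟩ := hZ z hz
    obtain ⟨c, hc, hc0, hcle⟩ := (exists_mem_ratioLattice_or_traceDual b hA (hK'.trans hKz)
      (hkK.trans_le hKz)).resolve_left hns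
    refine ⟨hrange, c, hc, hc0, fun j => (hcle j).trans' ?_⟩
    gcongr
  rw [← card_filter_add_card_filter_not IsShort, add_mul]
  calc #(Z.filter IsShort) * K ^ 2 + #(Z.filter (¬ IsShort ·)) * K ^ 2
      ≤ #(Z.filter IsShort) * (4 * k ^ 2) ^ 2 + 81 * 216 ^ 2 * (∏ i, H i) ^ 2 := by gcongr
    _ = 16 * (#(Z.filter IsShort) * k ^ 4) + 81 * 216 ^ 2 * (∏ i, H i) ^ 2 := by ring
    _ ≤ 1296 * 486 ^ 2 * (∏ i, H i) ^ 2 := by linarith [Nat.zero_le ((∏ i, H i) ^ 2)]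

theorem card_filter_le_card_ratioPoints_mul_sq_le [Fact p.Prime] [Fintype F]
    (b : Basis (Fin 2) (ZMod p) F) {H : Fin 2 → ℕ} (hH1 : ∀ i, 1 ≤ H i)
    (hH : ∀ i, 2 * H i ^ 2 < p) {K : ℕ} (hK : 2 ≤ K) :
    #{z | K ≤ #(ratioPoints b H z)} * K ^ 2 ≤ 4 * 10 ^ 8 * (∏ i, H i) ^ 2 := by
  have hH' (i) : 2 * H i < p :=
    (Nat.mul_le_mul_left 2 (Nat.le_self_pow two_ne_zero _)).trans_lt (hH i)
  have hA : 2 * ∏ i, H i < p := by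
    rw [Fin.prod_univ_two]
    nlinarith [hH 0, hH 1, two_mul_le_add_sq (H 0) (H 1)]
  let Z : Finset F := {z | K ≤ #(ratioPoints b H z)}
  have hZ {z} (hz : z ∈ Z) : K ≤ #(ratioPoints b H z) := (mem_filter.1 hz).2
  have hin := card_mul_sq_le_of_mem_range b hH1 hH hK
    (Z := Z.filter (· ∈ Set.range (algebraMap (ZMod p) F))) fun z hz =>
      ⟨(mem_filter.1 hz).2, hZ (mem_filter.1 hz).1⟩
  have hout := card_mul_sq_le_of_notMem_range b hH1 hH' hA hK
    (Z := Z.filter (· ∉ Set.range (algebraMap (ZMod p) F))) fun z hz =>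
      ⟨(mem_filter.1 hz).2, hZ (mem_filter.1 hz).1⟩
  change #Z * K ^ 2 ≤ _
  rw [← card_filter_add_card_filter_not (· ∈ Set.range (algebraMap (ZMod p) F)), add_mul]
  linarith [Nat.zero_le ((∏ i, H i) ^ 2)]

end RichRatios

/-! ### The energy of a box -/

section Energy

open Finset Module

theorem sum_sq_le_two_mul_one_add_log {α : Type*} {s : Finset α} {f : α → ℕ} {M : ℕ} {X : ℝ}
    (hf : ∀ a ∈ s, f a ≤ M) (hX : ∀ K : ℕ, 1 ≤ K → #{a ∈ s | K ≤ f a} * (K : ℝ) ^ 2 ≤ X) :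
    ∑ a ∈ s, (f a : ℝ) ^ 2 ≤ 2 * X * (1 + Real.log M) := by
  have hsq (n : ℕ) : (n : ℝ) ^ 2 ≤ ∑ K ∈ Icc 1 n, 2 * (K : ℝ) := by
    induction n with
    | zero => simp
    | succ n ih =>
      rw [sum_Icc_succ_top (by omega)]
      push_cast
      nlinarith [n.cast_nonneg (α := ℝ)]
  have hX0 : 0 ≤ X := (by positivity : (0 : ℝ) ≤ _).trans (hX 1 le_rfl)
  calc ∑ a ∈ s, (f a : ℝ) ^ 2 ≤ ∑ a ∈ s, ∑ K ∈ Icc 1 M with K ≤ f a, 2 * (K : ℝ) := by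
        refine sum_le_sum fun a ha => (hsq (f a)).trans_eq (sum_congr ?_ fun _ _ => rfl)
        ext K
        have := hf a ha
        simp only [mem_filter, mem_Icc]
        omega
    _ = ∑ K ∈ Icc 1 M, #{a ∈ s | K ≤ f a} * (2 * (K : ℝ)) := by
        simp only [sum_filter, sum_comm (s := s), ← nsmul_eq_mul, ← sum_const]
    _ ≤ ∑ K ∈ Icc 1 M, 2 * X * (K : ℝ)⁻¹ := by
        refine sum_le_sum fun K hK => ?_
        have hK0 : (0 : ℝ) < K := by exact_mod_cast (mem_Icc.1 hK).1
        rw [← div_eq_mul_inv, le_div_iff₀ hK0]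
        linarith [hX K (mem_Icc.1 hK).1]
    _ = 2 * X * (harmonic M : ℝ) := by rw [← mul_sum, harmonic_eq_sum_Icc]; push_cast; rfl
    _ ≤ 2 * X * (1 + Real.log M) := by gcongr; exact harmonic_le_one_add_log M

variable {F : Type*} [Field F]

/-- The pairs `(x, y)` of elements of `B` with `x = z * y` and `y ≠ 0`. -/
noncomputable def pairsWithRatio (B : Finset F) (z : F) : Finset (F × F) :=
  {q ∈ B ×ˢ B | q.2 ≠ 0 ∧ q.1 = z * q.2}

theorem mem_pairsWithRatio {B : Finset F} {z : F} {q : F × F} :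
    q ∈ pairsWithRatio B z ↔ (q.1 ∈ B ∧ q.2 ∈ B) ∧ q.2 ≠ 0 ∧ q.1 = z * q.2 := by
  rw [pairsWithRatio, mem_filter, mem_product]

theorem card_pairsWithRatio_le (B : Finset F) (z : F) : #(pairsWithRatio B z) ≤ #B := by
  refine card_le_card_of_injOn Prod.snd (fun q hq => (mem_pairsWithRatio.1 hq).1.2)
    fun q hq q' hq' h => Prod.ext ?_ h
  rw [(mem_pairsWithRatio.1 hq).2.2, (mem_pairsWithRatio.1 hq').2.2, h]

theorem sum_card_pairsWithRatio_le [Fintype F] (B : Finset F) :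
    ∑ z, #(pairsWithRatio B z) ≤ #B ^ 2 := by
  rw [← card_biUnion fun z _ w _ hzw => disjoint_left.2 fun q hz hw => hzw ?_, sq, ← card_product]
  · exact card_le_card (biUnion_subset.2 fun z _ => filter_subset _ _)
  · obtain ⟨-, hq0, hz⟩ := mem_pairsWithRatio.1 hz
    exact mul_right_cancel₀ hq0 (hz.symm.trans (mem_pairsWithRatio.1 hw).2.2)

theorem card_filter_mul_eq_zero_le (B : Finset F) : #{q ∈ B ×ˢ B | q.1 * q.2 = 0} ≤ 2 * #B := by
  have hsub : {q ∈ B ×ˢ B | q.1 * q.2 = 0} ⊆ {0} ×ˢ B ∪ B ×ˢ {0} := by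
    intro q hq
    simp only [mem_filter, mem_product, mul_eq_zero] at hq
    simp only [mem_union, mem_product, mem_singleton]
    tauto
  refine (card_le_card hsub).trans ((card_union_le _ _).trans_eq ?_)
  simp only [card_product, card_singleton]
  ring

theorem mulEnergy_self_le_add_sum_sq [Fintype F] (B : Finset F) :
    mulEnergy B B ≤ 4 * #B ^ 2 + ∑ z, #(pairsWithRatio B z) ^ 2 := by
  let Q : Finset ((F × F) × F × F) := {q ∈ (B ×ˢ B) ×ˢ B ×ˢ B | q.1.1 * q.1.2 = q.2.1 * q.2.2}
  have hzero : #{q ∈ Q | q.1.1 * q.1.2 = 0} ≤ 4 * #B ^ 2 := by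
    calc #{q ∈ Q | q.1.1 * q.1.2 = 0}
        ≤ #({q ∈ B ×ˢ B | q.1 * q.2 = 0} ×ˢ {q ∈ B ×ˢ B | q.1 * q.2 = 0}) := by
          refine card_le_card fun q hq => ?_
          simp only [Q, mem_filter, mem_product] at hq ⊢
          grind
      _ ≤ (2 * #B) * (2 * #B) := by
          rw [card_product]
          gcongr <;> exact card_filter_mul_eq_zero_le B
      _ = 4 * #B ^ 2 := by ring
  have hne : #{q ∈ Q | q.1.1 * q.1.2 ≠ 0} ≤ ∑ z, #(pairsWithRatio B z) ^ 2 := by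
    rw [card_eq_sum_card_fiberwise (f := fun q => q.1.1 / q.2.1) (t := univ)
      fun _ _ => mem_coe.2 (mem_univ _)]
    refine sum_le_sum fun z _ => ?_
    rw [sq, ← card_product]
    refine card_le_card_of_injOn (fun q => ((q.1.1, q.2.1), (q.2.2, q.1.2))) (fun q hq => ?_)
      fun q _ q' _ h => by grind
    simp only [Q, coe_filter, mem_filter, mem_product, Set.mem_ofPred_eq] at hq
    obtain ⟨⟨⟨⟨⟨hx, hy⟩, hw, ht⟩, heq⟩, hne⟩, rfl⟩ := hq
    have hw0 := left_ne_zero_of_mul (heq ▸ hne)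
    refine mem_coe.2 (mem_product.2 ⟨mem_pairsWithRatio.2 ⟨⟨hx, hw⟩, hw0, ?_⟩,
      mem_pairsWithRatio.2 ⟨⟨ht, hy⟩, right_ne_zero_of_mul hne, ?_⟩⟩)
    · exact (div_mul_cancel₀ _ hw0).symm
    · rw [div_mul_eq_mul_div, heq, mul_div_cancel_left₀ _ hw0]
  rw [mulEnergy_eq_card_filter, ← card_filter_add_card_filter_not fun q => q.1.1 * q.1.2 = 0]
  exact add_le_add hzero hne

variable {p : ℕ} {ι : Type*} [Fintype ι]

/-- The box of all `∑ i, x i • b i` with `x i` an integer and `N i + 1 ≤ x i ≤ N i + H i`. -/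
noncomputable def integerBox (b : ι → F) (N : ι → ℤ) (H : ι → ℕ) : Finset F :=
  (Fintype.piFinset fun i => Icc (N i + 1) (N i + H i)).image (Fintype.linearCombination ℤ b)

theorem card_integerBox_le (b : ι → F) (N : ι → ℤ) (H : ι → ℕ) :
    #(integerBox b N H) ≤ ∏ i, H i :=
  card_image_le.trans_eq (by simp [Fintype.card_piFinset])

theorem card_pairsWithRatio_integerBox_le (b : ι → F) (N : ι → ℤ) (H : ι → ℕ) (z : F) :
    #(pairsWithRatio (integerBox b N H) z) ≤ #(ratioPoints b H z) := by
  obtain hempty | ⟨q₀, hq₀⟩ := (pairsWithRatio (integerBox b N H) z).eq_empty_or_nonempty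
  · simp [hempty]
  let φ := Fintype.linearCombination ℤ b
  have hcoord (x : F) (hx : x ∈ integerBox b N H) :
      ∃ m : ι → ℤ, (∀ i, N i + 1 ≤ m i ∧ m i ≤ N i + H i) ∧ φ m = x := by
    simpa only [integerBox, mem_image, Fintype.mem_piFinset, mem_Icc] using hx
  choose! m hm hφ using hcoord
  obtain ⟨⟨hx₀, hy₀⟩, -, hz₀⟩ := mem_pairsWithRatio.1 hq₀
  refine card_le_card_of_injOn (fun q => Sum.elim (m q.1 - m q₀.1) (m q.2 - m q₀.2))
    (fun q hq => ?_) fun q hq q' hq' h => ?_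
  · obtain ⟨⟨hx, hy⟩, -, hz⟩ := mem_pairsWithRatio.1 hq
    refine mem_coe.2 (mem_ratioPoints.2 ⟨?_, mem_ratioLattice.2 ?_⟩)
    · have hdiff {x y : F} (hx : x ∈ integerBox b N H) (hy : y ∈ integerBox b N H) (i : ι) :
          |(m x - m y) i| ≤ H i := by
        rw [Pi.sub_apply, abs_le]
        have := hm x hx i
        have := hm y hy i
        omega
      exact Sum.rec (hdiff hx hx₀) (hdiff hy hy₀)
    · change φ (m q.1 - m q₀.1) = z * φ (m q.2 - m q₀.2)
      rw [map_sub, map_sub, hφ _ hx, hφ _ hx₀, hφ _ hy, hφ _ hy₀, hz, hz₀, mul_sub]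
  · obtain ⟨⟨hx, hy⟩, -⟩ := mem_pairsWithRatio.1 hq
    obtain ⟨⟨hx', hy'⟩, -⟩ := mem_pairsWithRatio.1 hq'
    have h₁ : m q.1 - m q₀.1 = m q'.1 - m q₀.1 := funext fun i => congrFun h (Sum.inl i)
    have h₂ : m q.2 - m q₀.2 = m q'.2 - m q₀.2 := funext fun i => congrFun h (Sum.inr i)
    refine Prod.ext ?_ ?_
    · rw [← hφ _ hx, ← hφ _ hx', sub_left_injective h₁]
    · rw [← hφ _ hy, ← hφ _ hy', sub_left_injective h₂]

theorem sum_card_pairsWithRatio_integerBox_sq_le [Fact p.Prime] [Fintype F] [Algebra (ZMod p) F]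
    (b : Basis (Fin 2) (ZMod p) F) {N : Fin 2 → ℤ} {H : Fin 2 → ℕ} (hH1 : ∀ i, 1 ≤ H i)
    (hH : ∀ i, 2 * H i ^ 2 < p) :
    ∑ z, (#(pairsWithRatio (integerBox b N H) z) : ℝ) ^ 2 ≤
      2 * (4 * 10 ^ 8 * (∏ i, (H i : ℝ)) ^ 2) * (1 + Real.log (∏ i, H i : ℕ)) := by
  have hB := card_integerBox_le b N H
  refine sum_sq_le_two_mul_one_add_log (fun z _ => (card_pairsWithRatio_le _ z).trans hB)
    fun K hK => ?_
  suffices h : #{z | K ≤ #(pairsWithRatio (integerBox b N H) z)} * K ^ 2 ≤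
      4 * 10 ^ 8 * (∏ i, H i) ^ 2 by exact_mod_cast h
  obtain rfl | hK2 := eq_or_lt_of_le hK
  · calc #{z | 1 ≤ #(pairsWithRatio (integerBox b N H) z)} * 1 ^ 2
        ≤ ∑ z with 1 ≤ #(pairsWithRatio (integerBox b N H) z),
            #(pairsWithRatio (integerBox b N H) z) := by
          rw [one_pow, mul_one, card_eq_sum_ones]
          exact sum_le_sum fun z hz => (mem_filter.1 hz).2
      _ ≤ ∑ z, #(pairsWithRatio (integerBox b N H) z) := sum_le_univ_sum_of_nonneg (by simp)
      _ ≤ (∏ i, H i) ^ 2 := (sum_card_pairsWithRatio_le _).trans (by gcongr)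
      _ ≤ 4 * 10 ^ 8 * (∏ i, H i) ^ 2 := Nat.le_mul_of_pos_left _ (by norm_num)
  · refine le_trans ?_ (card_filter_le_card_ratioPoints_mul_sq_le b hH1 hH hK2)
    gcongr with z
    exact card_pairsWithRatio_integerBox_le b N H z

theorem one_le_log_natCast {n : ℕ} (hn : 3 ≤ n) : 1 ≤ Real.log n := by
  have hn' : (3 : ℝ) ≤ n := by exact_mod_cast hn
  rw [Real.le_log_iff_exp_le (by positivity)]
  linarith [Real.exp_one_lt_d9]

theorem mulEnergy_integerBox_le [Fact p.Prime] [Algebra (ZMod p) F]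
    (b : Basis (Fin 2) (ZMod p) F) (N : Fin 2 → ℤ) {H : Fin 2 → ℕ} (hH1 : ∀ i, 1 ≤ H i)
    (hH : ∀ i, 2 * H i ^ 2 < p) :
    (mulEnergy (integerBox b N H) (integerBox b N H) : ℝ) ≤
      2 * 10 ^ 9 * (∏ i, (H i : ℝ)) ^ 2 * Real.log p := by
  have : Module.Finite (ZMod p) F := .of_basis b
  have : Finite F := Module.finite_of_finite (ZMod p)
  cases nonempty_fintype F
  have hlog : 1 ≤ Real.log p := one_le_log_natCast (by nlinarith [hH 0, hH1 0])
  have hA : 0 < ∏ i, H i := prod_pos fun i _ => hH1 i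
  have hlogA : Real.log (∏ i, H i : ℕ) ≤ Real.log p := by
    gcongr
    rw [Fin.prod_univ_two]
    nlinarith [hH 0, hH 1, two_mul_le_add_sq (H 0) (H 1)]
  have henergy : (mulEnergy (integerBox b N H) (integerBox b N H) : ℝ) ≤
      4 * #(integerBox b N H) ^ 2 + ∑ z, (#(pairsWithRatio (integerBox b N H) z) : ℝ) ^ 2 := by
    exact_mod_cast mulEnergy_self_le_add_sum_sq (integerBox b N H)
  have hB : (#(integerBox b N H) : ℝ) ≤ ∏ i, (H i : ℝ) := by
    exact_mod_cast card_integerBox_le b N H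
  calc (mulEnergy (integerBox b N H) (integerBox b N H) : ℝ)
      ≤ 4 * (∏ i, (H i : ℝ)) ^ 2 +
          2 * (4 * 10 ^ 8 * (∏ i, (H i : ℝ)) ^ 2) * (1 + Real.log (∏ i, H i : ℕ)) := by
        refine henergy.trans (add_le_add ?_ (sum_card_pairsWithRatio_integerBox_sq_le b hH1 hH))
        gcongr
    _ ≤ 4 * (∏ i, (H i : ℝ)) ^ 2 * Real.log p +
          2 * (4 * 10 ^ 8 * (∏ i, (H i : ℝ)) ^ 2) * (Real.log p + Real.log p) := by
        exact add_le_add (le_mul_of_one_le_right (by positivity) hlog) (by gcongr)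
    _ ≤ 2 * 10 ^ 9 * (∏ i, (H i : ℝ)) ^ 2 * Real.log p := by
        have : 0 ≤ (∏ i, (H i : ℝ)) ^ 2 * Real.log p := by positivity
        linarith

end Energy

section Main

open Module

variable {p : ℕ} {ι F : Type*} [Fintype ι] [Field F]

theorem exists_basis_coe_eq [Algebra (ZMod p) F] {ω : ι → F}
    (hindep : ∀ c : ι → ℤ, ∑ i, (c i : F) * ω i = 0 → ∀ i, (p : ℤ) ∣ c i)
    (hspan : ∀ x : F, ∃ c : ι → ℤ, x = ∑ i, (c i : F) * ω i) :
    ∃ b : Basis ι (ZMod p) F, ⇑b = ω := by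
  have hsum (c : ι → ℤ) : ∑ i, (c i : ZMod p) • ω i = ∑ i, (c i : F) * ω i := by
    simp [Algebra.smul_def]
  refine ⟨Basis.mk (Fintype.linearIndependent_iff.2 fun g hg i => ?_) fun x _ => ?_,
    Basis.coe_mk _ _⟩
  · choose c hc using fun i => ZMod.intCast_surjective (g i)
    rw [← hc i, ZMod.intCast_zmod_eq_zero_iff_dvd]
    exact hindep c (by simpa only [← hsum, hc] using hg) i
  · obtain ⟨c, rfl⟩ := hspan x
    exact (Submodule.mem_span_range_iff_exists_fun _).2 ⟨_, hsum c⟩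

theorem integerBox_fin_two (b : Fin 2 → F) (N : Fin 2 → ℤ) (H : Fin 2 → ℕ) :
    integerBox b N H = (Finset.Icc (N 0 + 1) (N 0 + H 0) ×ˢ Finset.Icc (N 1 + 1) (N 1 + H 1)).image
      fun x => (x.1 : F) * b 0 + (x.2 : F) * b 1 := by
  ext z
  simp only [integerBox, Finset.mem_image, Fintype.mem_piFinset, Finset.mem_product,
    Fintype.linearCombination_apply, Fin.sum_univ_two, Fin.forall_fin_two, zsmul_eq_mul]
  exact ⟨fun ⟨m, hm, hz⟩ => ⟨(m 0, m 1), hm, hz⟩, fun ⟨x, hx, hz⟩ => ⟨![x.1, x.2], hx, hz⟩⟩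

theorem card_filter_mul_eq_mul_eq_mulEnergy {M : Type*} [Mul M] (s t : Finset M) :
    {q ∈ s ×ˢ t ×ˢ s ×ˢ t | q.1 * q.2.1 = q.2.2.1 * q.2.2.2}.card = s.mulEnergy t := by
  rw [Finset.mulEnergy_eq_card_filter]
  refine Finset.card_equiv (Equiv.prodAssoc M M (M × M)).symm fun q => ?_
  simp only [Finset.mem_filter, Finset.mem_product, Equiv.prodAssoc_symm_apply, and_assoc]

end Main

theorem stmt_5_general :
    ∃ C : ℝ, 0 < C ∧
      ∀ (p : ℕ), p.Prime →
      ∀ (F : Type*) [Field F] [Fintype F],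
        Fintype.card F = p ^ 2 →
        ∀ (ω : Fin 2 → F),
          (∀ c : Fin 2 → ℤ, (∑ i, (c i : F) * ω i) = 0 → ∀ i, (p : ℤ) ∣ c i) →
          (∀ x : F, ∃ c : Fin 2 → ℤ, x = ∑ i, (c i : F) * ω i) →
        ∀ (N : Fin 2 → ℤ) (H : Fin 2 → ℕ),
          (∀ i, 1 ≤ H i) →
          (∀ i, (H i : ℝ) < Real.sqrt ((p : ℝ) / 2)) →
          let B : Finset F :=
            (Finset.Icc (N 0 + 1) (N 0 + (H 0 : ℤ)) ×ˢ
              Finset.Icc (N 1 + 1) (N 1 + (H 1 : ℤ))).image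
              (fun x => (x.1 : F) * ω 0 + (x.2 : F) * ω 1)
          (((B ×ˢ B ×ˢ B ×ˢ B).filter
              (fun q => q.1 * q.2.1 = q.2.2.1 * q.2.2.2)).card : ℝ) ≤
            C * ((H 0 : ℝ) * (H 1 : ℝ)) ^ 2 * Real.log p := by
  refine ⟨2 * 10 ^ 9, by norm_num, fun p hp F _ _ hcard ω hindep hspan N H hH1 hH => ?_⟩
  have : Fact p.Prime := ⟨hp⟩
  have : CharP F p := charP_of_card_eq_prime_pow hcard
  let _ : Algebra (ZMod p) F := ZMod.algebra F p
  obtain ⟨b, rfl⟩ := exists_basis_coe_eq hindep hspan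
  have hH' (i) : 2 * H i ^ 2 < p := by
    have := (Real.lt_sqrt (Nat.cast_nonneg _)).1 (hH i)
    exact_mod_cast (by linarith : (2 : ℝ) * H i ^ 2 < p)
  have henergy := mulEnergy_integerBox_le b N hH1 hH'
  rwa [Fin.prod_univ_two, ← card_filter_mul_eq_mul_eq_mulEnergy, integerBox_fin_two] at henergy

/-- The Key Lemma for `n = 2`: the multiplicative energy of a box with edges
`H₁ ≤ H₂ < √(p/2)` is `O(|B|² (log p)³)`. -/
theorem stmt_5 :
    ∃ C : ℝ, 0 < C ∧
      ∀ (p : ℕ), p.Prime → 3 ≤ p →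
      ∀ (F : Type) [instField : Field F] [instFintype : Fintype F],
        Fintype.card F = p ^ 2 →
        ∀ (ω : Fin 2 → F),
          (∀ c : Fin 2 → ℤ, (∑ i, (c i : F) * ω i) = 0 → ∀ i, (p : ℤ) ∣ c i) →
          (∀ x : F, ∃ c : Fin 2 → ℤ, x = ∑ i, (c i : F) * ω i) →
        ∀ (N : Fin 2 → ℤ) (H : Fin 2 → ℕ),
          (∀ i, 1 ≤ H i) →
          H 0 ≤ H 1 →
          (H 1 : ℝ) < Real.sqrt ((p : ℝ) / 2) →
          let B : Finset F :=
            (Finset.Icc (N 0 + 1) (N 0 + (H 0 : ℤ)) ×ˢ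
              Finset.Icc (N 1 + 1) (N 1 + (H 1 : ℤ))).image
              (fun x => (x.1 : F) * ω 0 + (x.2 : F) * ω 1)
          (((B ×ˢ B ×ˢ B ×ˢ B).filter
              (fun q => q.1 * q.2.1 = q.2.2.1 * q.2.2.2)).card : ℝ) ≤
            C * ((H 0 : ℝ) * (H 1 : ℝ)) ^ 2 * Real.log p ^ 3 := by
  obtain ⟨C, hC, h⟩ := stmt_5_general
  refine ⟨C, hC, fun p hp hp3 F _ _ hF ω hindep hspan N H hH1 hle hlt => ?_⟩
  refine (h p hp F hF ω hindep hspan N H hH1 (Fin.forall_fin_two.2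
    ⟨(Nat.cast_le.2 hle).trans_lt hlt, hlt⟩)).trans ?_
  gcongr
  exact le_self_pow₀ (one_le_log_natCast hp3) three_ne_zero
end
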